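/- Let R be a commutative ring and A and B be flat R-algebras such that A ⊗_R B is noetherian. (i) If A ⊗_R B is almost Cohen-Macaulay, then A_p and B_q are almost Cohen-Macaulay for any p ∈ Spec(A) and q ∈ Spec(B) with p ∩ R = q ∩ R. (ii) Conversely, if for any p ∈ Spec(A) and q ∈ Spec(B) with p ∩ R = q ∩ R the rings A_p and B_q are almost Cohen-Macaulay and one of them is Cohen-Macaulay, then A ⊗_R B is almost Cohen-Macaulay. -/

import Mathlib

noncomputable section

open TensorProduct

universe u v w





/-- The depth of the ideal `I` on the module `M`: the supremum of lengths of
`M`-regular sequences with entries in `I`. -/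
noncomputable def idealDepth (A : Type u) [CommRing A] (I : Ideal A)
    (M : Type v) [AddCommGroup M] [Module A M] : ℕ∞ :=
  sSup {n : ℕ∞ | ∃ rs : List A, (rs.length : ℕ∞) = n ∧ (∀ r ∈ rs, r ∈ I) ∧
    RingTheory.Sequence.IsRegular M rs}

/-- The depth of a module over a local ring. -/
noncomputable def localDepth (A : Type u) [CommRing A] [IsLocalRing A]
    (M : Type v) [AddCommGroup M] [Module A M] : ℕ∞ :=
  idealDepth A (IsLocalRing.maximalIdeal A) M

/-- The (Krull) dimension of a module, i.e. the Krull dimension of its support. -/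
noncomputable def supportDim (A : Type u) [CommRing A]
    (M : Type v) [AddCommGroup M] [Module A M] : WithBot ℕ∞ :=
  Order.krullDim (Module.support A M)

/-- `depth (M_P)` : the depth of the localization of `M` at a prime `P`,
over the local ring `A_P`. -/
noncomputable def depthAt (A : Type u) [CommRing A]
    (M : Type v) [AddCommGroup M] [Module A M] (P : PrimeSpectrum A) : ℕ∞ :=
  localDepth (Localization.AtPrime P.asIdeal) (LocalizedModule P.asIdeal.primeCompl M)

/-- `ht_M(P) = dim (M_P)` : the height of a prime `P` in the support of `M`,
i.e. the dimension of the localized module `M_P` over `A_P`. -/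
noncomputable def heightAt (A : Type u) [CommRing A]
    (M : Type v) [AddCommGroup M] [Module A M] (P : PrimeSpectrum A) : WithBot ℕ∞ :=
  supportDim (Localization.AtPrime P.asIdeal) (LocalizedModule P.asIdeal.primeCompl M)

/-- Serre's condition `(S_n)` for a module: for every `P` in the support,
`depth (M_P) ≥ min (n, ht_M(P))`. -/
def SerreCondS (A : Type u) [CommRing A] (n : ℕ)
    (M : Type v) [AddCommGroup M] [Module A M] : Prop :=
  ∀ P ∈ Module.support A M,
    min (n : WithBot ℕ∞) (heightAt A M P) ≤ (depthAt A M P : WithBot ℕ∞)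

/-- The condition `(C_n)` for a module: for every `P` in the support,
`depth (M_P) ≥ min (n, ht_M(P)) - 1`, equivalently
`min (n, ht_M(P)) ≤ depth (M_P) + 1`. -/
def CondC (A : Type u) [CommRing A] (n : ℕ)
    (M : Type v) [AddCommGroup M] [Module A M] : Prop :=
  ∀ P ∈ Module.support A M,
    min (n : WithBot ℕ∞) (heightAt A M P) ≤ (depthAt A M P : WithBot ℕ∞) + 1

/-- A module `M` is almost Cohen-Macaulay if `depth(P, M) = depth (M_P)` for every
`P` in the support of `M` (Kang's definition). -/
def IsAlmostCMModule (A : Type u) [CommRing A]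
    (M : Type v) [AddCommGroup M] [Module A M] : Prop :=
  ∀ P ∈ Module.support A M, idealDepth A P.asIdeal M = depthAt A M P

/-- A module `M` is Cohen-Macaulay if `depth (M_P) = dim (M_P)` for every `P` in its
support. -/
def IsCMModule (A : Type u) [CommRing A]
    (M : Type v) [AddCommGroup M] [Module A M] : Prop :=
  ∀ P ∈ Module.support A M, (depthAt A M P : WithBot ℕ∞) = heightAt A M P

/-- A ring is almost Cohen-Macaulay if it is an almost Cohen-Macaulay module over
itself. -/
abbrev IsAlmostCMRing (A : Type u) [CommRing A] : Prop := IsAlmostCMModule A A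

/-- A ring is Cohen-Macaulay if it is a Cohen-Macaulay module over itself, i.e. all its
localizations at primes have depth equal to dimension. -/
abbrev IsCMRing (A : Type u) [CommRing A] : Prop := IsCMModule A A

/-- A ring satisfies `(C_n)` if it does so as a module over itself. -/
abbrev RingCondC (A : Type u) [CommRing A] (n : ℕ) : Prop := CondC A n A

/-- A ring satisfies `(S_n)` if it does so as a module over itself. -/
abbrev RingSerreCondS (A : Type u) [CommRing A] (n : ℕ) : Prop := SerreCondS A n A


/-- A finitely generated module over a noetherian local ring is almost Cohen-Macaulay
iff `dim M ≤ depth M + 1`. -/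
def IsLocalACM (A : Type u) [CommRing A] [IsLocalRing A]
    (M : Type v) [AddCommGroup M] [Module A M] : Prop :=
  supportDim A M ≤ (localDepth A M : WithBot ℕ∞) + 1

/-- A noetherian local ring is Cohen-Macaulay if its depth equals its dimension. -/
def IsLocalCMRing (A : Type u) [CommRing A] [IsLocalRing A] : Prop :=
  (localDepth A A : WithBot ℕ∞) = ringKrullDim A

section Depth

open RingTheory.Sequence CategoryTheory Abelian IsSMulRegular Pointwise

variable {A : Type u} [CommRing A] {I : Ideal A}
  {M : Type v} [AddCommGroup M] [Module A M]

theorem RingTheory.Sequence.IsRegular.take {rs : List A} (h : IsRegular M rs) (n : ℕ) :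
    IsRegular M (rs.take n) := by
  refine ⟨?_, fun e => h.top_ne_smul (le_antisymm ?_ le_top)⟩
  · exact ((isWeaklyRegular_append_iff M (rs.take n) (rs.drop n)).mp
      (by simpa using h.toIsWeaklyRegular)).1
  · refine e.le.trans ?_
    exact Submodule.smul_mono_left (Ideal.span_mono fun x hx => List.mem_of_mem_take hx)

theorem natCast_le_idealDepth_iff [Nontrivial M] {n : ℕ} :
    (n : ℕ∞) ≤ idealDepth A I M ↔
      ∃ rs : List A, rs.length = n ∧ (∀ r ∈ rs, r ∈ I) ∧ IsRegular M rs := by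
  constructor
  · intro h
    rcases Nat.eq_zero_or_pos n with rfl | hn
    · exact ⟨[], rfl, by simp, .nil A M⟩
    obtain ⟨m, ⟨rs, rfl, hI, hr⟩, hm⟩ := lt_sSup_iff.mp
      (lt_of_lt_of_le (Nat.cast_lt.mpr (Nat.sub_lt hn one_pos)) h)
    refine ⟨rs.take n, ?_, fun r hr => hI r (List.mem_of_mem_take hr), hr.take n⟩
    have : n - 1 < rs.length := by exact_mod_cast hm
    simp; omega
  · rintro ⟨rs, rfl, hI, hr⟩
    exact le_sSup ⟨rs, rfl, hI, hr⟩

theorem idealDepth_mono {J : Ideal A} (h : I ≤ J) : idealDepth A I M ≤ idealDepth A J M :=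
  sSup_le_sSup fun _ ⟨rs, hl, hI, hr⟩ => ⟨rs, hl, fun r hr => h (hI r hr), hr⟩

theorem nontrivial_of_ideal_smul_ne_top (h : I • (⊤ : Submodule A M) ≠ ⊤) : Nontrivial M :=
  (Submodule.nontrivial_iff A).mp (nontrivial_of_ne _ _ h)

theorem ideal_smul_quotSMulTop_ne_top {x : A} (hx : x ∈ I) (h : I • (⊤ : Submodule A M) ≠ ⊤) :
    I • (⊤ : Submodule A (QuotSMulTop x M)) ≠ ⊤ := by
  by_contra eq
  absurd congrArg (Submodule.comap (Submodule.mkQ _)) eq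
  simpa [Submodule.comap_smul_top_of_surjective I _ (Submodule.mkQ_surjective _),
    Submodule.smul_mono_left ((Ideal.span_singleton_le_iff_mem I).mpr hx),
    ← Submodule.ideal_span_singleton_smul] using h

theorem subsingleton_ext_quotSMulTop [Small.{v} A] (N M : ModuleCat.{v} A) {n : ℕ} {x : A}
    (hreg : IsSMulRegular M x) (h : ∀ i < n, Subsingleton (Ext N M i)) :
    ∀ i < n - 1, Subsingleton (Ext N (ModuleCat.of A (QuotSMulTop x M)) i) := by
  intro i hi
  have zero1 := AddCommGrpCat.isZero_of_iff_subsingleton.mpr (h i (by omega))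
  have zero2 := AddCommGrpCat.isZero_of_iff_subsingleton.mpr (h (i + 1) (by omega))
  exact AddCommGrpCat.subsingleton_of_isZero <| ShortComplex.Exact.isZero_of_both_zeros
    ((Ext.covariant_sequence_exact₃' N hreg.smulShortComplex_shortExact) i (i + 1) rfl)
    (zero1.eq_zero_of_src _) (zero2.eq_zero_of_tgt _)

theorem exists_isRegular_quotSMulTop [Small.{v} A] [IsNoetherianRing A] [Module.Finite A M]
    (hI : I • (⊤ : Submodule A M) ≠ ⊤) {x : A} (hx : x ∈ I) (hreg : IsSMulRegular M x)
    {rs : List A} (hmem : ∀ r ∈ rs, r ∈ I) (hrs : IsRegular M rs) :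
    ∃ rs' : List A, rs'.length = rs.length - 1 ∧ (∀ r ∈ rs', r ∈ I) ∧
      IsRegular (QuotSMulTop x M) rs' := by
  have hquot := ideal_smul_quotSMulTop_ne_top hx hI
  have hfin : Module.Finite A (Shrink.{v} (A ⧸ I)) :=
    Module.Finite.equiv (Shrink.linearEquiv A (A ⧸ I)).symm
  have hN : Module.support A (Shrink.{v} (A ⧸ I)) = PrimeSpectrum.zeroLocus I := by
    rw [(Shrink.linearEquiv A _).support_eq, Module.support_eq_zeroLocus, Ideal.annihilator_quotient]
  exact ModuleCat.exists_isRegular_of_exists_subsingleton_ext I (rs.length - 1)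
    (ModuleCat.of A (QuotSMulTop x M)) hquot.lt_top (ModuleCat.of A (Shrink.{v} (A ⧸ I))) hN
    (subsingleton_ext_quotSMulTop _ (ModuleCat.of A M) hreg
      (ModuleCat.subsingleton_ext_of_exists_isRegular I _ hN.subset (ModuleCat.of A M)
        hI.lt_top rs hmem hrs))

theorem idealDepth_eq_idealDepth_quotSMulTop_add_one [Small.{v} A] [IsNoetherianRing A]
    [Module.Finite A M]
    (hI : I • (⊤ : Submodule A M) ≠ ⊤) {x : A} (hx : x ∈ I) (hreg : IsSMulRegular M x) :
    idealDepth A I M = idealDepth A I (QuotSMulTop x M) + 1 := by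
  have := nontrivial_of_ideal_smul_ne_top hI
  have := nontrivial_of_ideal_smul_ne_top (ideal_smul_quotSMulTop_ne_top hx hI)
  refine le_antisymm (sSup_le ?_) (ENat.forall_natCast_le_iff_le.mp fun n hn => ?_)
  · rintro _ ⟨rs, rfl, hmem, hrs⟩
    obtain ⟨rs', hl, hmem', hrs'⟩ := exists_isRegular_quotSMulTop hI hx hreg hmem hrs
    calc (rs.length : ℕ∞) ≤ ((rs.length - 1 : ℕ) : ℕ∞) + 1 := by
          norm_cast; omega
      _ ≤ _ := by
          gcongr
          exact natCast_le_idealDepth_iff.mpr ⟨rs', hl, hmem', hrs'⟩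
  · rcases n with _ | n
    · simp
    · obtain ⟨rs, rfl, hmem, hrs⟩ := natCast_le_idealDepth_iff.mp
        (show (n : ℕ∞) ≤ idealDepth A I (QuotSMulTop x M) by
          push_cast at hn
          exact (ENat.add_le_add_iff_right (by simp)).mp hn)
      exact natCast_le_idealDepth_iff.mpr ⟨x :: rs, by simp, by simpa [hx] using hmem,
        .cons hreg hrs⟩

theorem idealDepth_congr_linearEquiv {M' : Type w} [AddCommGroup M'] [Module A M']
    (e : M ≃ₗ[A] M') : idealDepth A I M = idealDepth A I M' := by
  simp only [idealDepth, e.isRegular_congr]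

theorem idealDepth_eq_idealDepth_quotient_ofList_add_length [Small.{v} A] [IsNoetherianRing A]
    [Module.Finite A M] (hI : I • (⊤ : Submodule A M) ≠ ⊤) {rs : List A}
    (hmem : ∀ r ∈ rs, r ∈ I) (hrs : IsWeaklyRegular M rs) :
    idealDepth A I M =
      idealDepth A I (M ⧸ (Ideal.ofList rs • ⊤ : Submodule A M)) + rs.length := by
  induction rs generalizing M with
  | nil =>
    have e : (Ideal.ofList ([] : List A) • ⊤ : Submodule A M) = ⊥ := by simp
    simpa using (idealDepth_congr_linearEquiv (Submodule.quotEquivOfEqBot _ e)).symm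
  | cons r rs ih =>
    rw [isWeaklyRegular_cons_iff] at hrs
    simp only [List.mem_cons, forall_eq_or_imp] at hmem
    rw [idealDepth_eq_idealDepth_quotSMulTop_add_one hI hmem.1 hrs.1,
      ih (ideal_smul_quotSMulTop_ne_top hmem.1 hI) hmem.2 hrs.2,
      idealDepth_congr_linearEquiv
        (Submodule.quotOfListConsSMulTopEquivQuotSMulTopInner M r rs)]
    simp [add_assoc]

theorem idealDepth_eq_zero_of_smul_eq_zero {z : M} (hz : z ≠ 0) (h : ∀ x ∈ I, x • z = 0) :
    idealDepth A I M = 0 := by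
  refine le_antisymm (sSup_le ?_) zero_le
  rintro _ ⟨rs, rfl, hmem, hrs⟩
  rcases rs with _ | ⟨r, rs⟩
  · simp
  · rw [isRegular_cons_iff] at hrs
    exact absurd (hrs.1 (by simpa using h r (hmem r (by simp)))) hz

theorem exists_mem_isSMulRegular_of_idealDepth_ne_zero (h : idealDepth A I M ≠ 0) :
    ∃ x ∈ I, IsSMulRegular M x := by
  by_contra! hcon
  refine h (le_antisymm (sSup_le ?_) zero_le)
  rintro _ ⟨rs, rfl, hmem, hrs⟩
  rcases rs with _ | ⟨r, rs⟩
  · simp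
  · rw [isRegular_cons_iff] at hrs
    exact absurd hrs.1 (hcon r (hmem r (by simp)))

theorem idealDepth_ne_zero_of_isSMulRegular [IsNoetherianRing A] [Module.Finite A M]
    (hI : I • (⊤ : Submodule A M) ≠ ⊤) {x : A} (hx : x ∈ I) (hreg : IsSMulRegular M x) :
    idealDepth A I M ≠ 0 := by
  have := nontrivial_of_ideal_smul_ne_top (ideal_smul_quotSMulTop_ne_top hx hI)
  have := nontrivial_of_ideal_smul_ne_top hI
  have h : ((1 : ℕ) : ℕ∞) ≤ idealDepth A I M :=
    natCast_le_idealDepth_iff.mpr ⟨[x], rfl, by simpa, .cons hreg (.nil A _)⟩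
  intro h0
  simp [h0] at h

theorem exists_associatedPrime_of_idealDepth_eq_zero [IsNoetherianRing A] [Module.Finite A M]
    (hI : I • (⊤ : Submodule A M) ≠ ⊤) (h : idealDepth A I M = 0) :
    ∃ P ∈ associatedPrimes A M, I ≤ P := by
  have hsub : (I : Set A) ⊆ ⋃ P ∈ associatedPrimes A M, (P : Set A) := by
    intro x hx
    rw [biUnion_associatedPrimes_eq_compl_regular]
    exact fun hreg => idealDepth_ne_zero_of_isSMulRegular hI hx hreg h
  obtain ⟨P, hP, hle⟩ := (Ideal.subset_union_prime_finite (associatedPrimes.finite A M) (f := id) ⊥ ⊥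
    (fun P hP _ _ => hP.isPrime)).mp hsub
  exact ⟨P, hP, hle⟩

theorem exists_ne_zero_smul_eq_zero_of_idealDepth_eq_zero [IsNoetherianRing A] [Module.Finite A M]
    (hI : I • (⊤ : Submodule A M) ≠ ⊤) (h : idealDepth A I M = 0) :
    ∃ z : M, z ≠ 0 ∧ ∀ x ∈ I, x • z = 0 := by
  obtain ⟨P, hass, hle⟩ := exists_associatedPrime_of_idealDepth_eq_zero hI h
  obtain ⟨hP, z, rfl⟩ := isAssociatedPrime_iff.mp hass
  refine ⟨z, ?_, fun x hx => ?_⟩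
  · rintro rfl
    exact hP.ne_top (by simp)
  · simpa [Submodule.mem_colon_singleton] using hle hx

end Depth

section CMDefect

open RingTheory.Sequence IsLocalRing

theorem idealDepth_comap_eq_of_surjective {A : Type*} {F : Type*} [CommRing A] [CommRing F]
    {M M' : Type*} [AddCommGroup M] [AddCommGroup M'] [Module A M] [Module F M']
    (f : A →+* F) (hf : Function.Surjective f) (e : M ≃+ M') (he : ∀ a m, e (a • m) = f a • e m)
    (I : Ideal F) : idealDepth A (I.comap f) M = idealDepth F I M' := by
  have key (rs : List A) : IsRegular M rs ↔ IsRegular M' (rs.map f) :=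
    e.isRegular_congr <| List.forall₂_map_right_iff.mpr <| List.forall₂_same.mpr fun r _ x => he r x
  refine le_antisymm (sSup_le ?_) (sSup_le ?_)
  · rintro _ ⟨rs, rfl, hmem, hrs⟩
    exact le_sSup ⟨rs.map f, by simp, by simpa using hmem, (key rs).mp hrs⟩
  · rintro _ ⟨rs, rfl, hmem, hrs⟩
    obtain ⟨rs, rfl⟩ := hf.list_map rs
    exact le_sSup ⟨rs, by simp, by simpa using hmem, (key rs).mpr hrs⟩

theorem localDepth_eq_of_ringEquiv {A A' : Type*} [CommRing A] [CommRing A'] [IsLocalRing A]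
    [IsLocalRing A'] (e : A ≃+* A') : localDepth A A = localDepth A' A' := by
  rw [localDepth, localDepth, ← idealDepth_comap_eq_of_surjective (e : A →+* A') e.surjective
    e.toAddEquiv (by simp)]
  congr 1
  exact ((IsLocalRing.local_hom_TFAE (e : A →+* A')).out 0 4 rfl rfl |>.mp inferInstance).symm

theorem depthAt_self_eq_localDepth {A : Type*} [CommRing A] (P : PrimeSpectrum A) :
    depthAt A A P =
      localDepth (Localization.AtPrime P.asIdeal) (Localization.AtPrime P.asIdeal) :=
  idealDepth_congr_linearEquiv
    ((LocalizedModule.equivTensorProduct P.asIdeal.primeCompl A).trans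
      (TensorProduct.AlgebraTensorModule.rid A (Localization P.asIdeal.primeCompl)
        (Localization P.asIdeal.primeCompl)))

theorem localDepth_le_ringKrullDim (A : Type*) [CommRing A] [IsLocalRing A] [IsNoetherianRing A] :
    (localDepth A A : WithBot ℕ∞) ≤ ringKrullDim A := by
  rw [← maximalIdeal_height_eq_ringKrullDim]
  norm_cast
  refine sSup_le ?_
  rintro _ ⟨rs, rfl, hmem, hrs⟩
  have h := ringKrullDim_add_length_eq_ringKrullDim_of_isRegular rs hrs
  have : Nontrivial (A ⧸ Ideal.ofList rs) := by
    have := hrs.quot_ofList_smul_nontrivial ⊤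
    simpa using this
  have h0 : (0 : WithBot ℕ∞) ≤ ringKrullDim (A ⧸ Ideal.ofList rs) := ringKrullDim_nonneg_of_nontrivial
  have := (add_le_add_left h0 (rs.length : WithBot ℕ∞)).trans h.le
  rw [zero_add, ← maximalIdeal_height_eq_ringKrullDim] at this
  exact_mod_cast this

/-- The Cohen-Macaulay defect `dim A - depth A` of a local ring. -/
def cmDefect (A : Type*) [CommRing A] [IsLocalRing A] : ℕ :=
  (maximalIdeal A).height.toNat - (localDepth A A).toNat

section Local

variable (A : Type*) [CommRing A] [IsLocalRing A] [IsNoetherianRing A]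

theorem localDepth_ne_top : localDepth A A ≠ ⊤ := by
  intro h
  have := localDepth_le_ringKrullDim A
  rw [h] at this
  exact absurd (this.trans_lt ringKrullDim_lt_top) (lt_irrefl _)

theorem height_maximalIdeal_ne_top : (maximalIdeal A).height ≠ ⊤ :=
  Ideal.height_ne_top (maximalIdeal.isMaximal A).ne_top

theorem localDepth_le_height : localDepth A A ≤ (maximalIdeal A).height := by
  have := localDepth_le_ringKrullDim A
  rw [← maximalIdeal_height_eq_ringKrullDim] at this
  exact_mod_cast this

theorem height_maximalIdeal_eq_localDepth_add_cmDefect :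
    (maximalIdeal A).height = localDepth A A + cmDefect A := by
  have h := localDepth_le_height A
  have h1 := localDepth_ne_top A
  have h2 := height_maximalIdeal_ne_top A
  unfold cmDefect
  generalize localDepth A A = a at *
  generalize (maximalIdeal A).height = b at *
  lift a to ℕ using h1
  lift b to ℕ using h2
  norm_cast at *
  simp only [ENat.toNat_natCast]
  omega

theorem cmDefect_le_iff (n : ℕ) :
    cmDefect A ≤ n ↔ (maximalIdeal A).height ≤ localDepth A A + n := by
  rw [height_maximalIdeal_eq_localDepth_add_cmDefect, ENat.add_le_add_iff_left (localDepth_ne_top A)]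
  simp

theorem cmDefect_eq_zero_iff : cmDefect A = 0 ↔ (localDepth A A : WithBot ℕ∞) = ringKrullDim A := by
  rw [← Nat.le_zero, cmDefect_le_iff, ← maximalIdeal_height_eq_ringKrullDim]
  norm_cast
  simp only [add_zero]
  exact ⟨fun h => le_antisymm (localDepth_le_height A) h, fun h => h.ge⟩

end Local

theorem cmDefect_eq_of_ringEquiv {A A' : Type*} [CommRing A] [CommRing A'] [IsLocalRing A]
    [IsLocalRing A'] (e : A ≃+* A') : cmDefect A = cmDefect A' := by
  have h : (maximalIdeal A).height = (maximalIdeal A').height := by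
    have := ringKrullDim_eq_of_ringEquiv e
    rw [← maximalIdeal_height_eq_ringKrullDim, ← maximalIdeal_height_eq_ringKrullDim] at this
    exact_mod_cast this
  rw [cmDefect, cmDefect, localDepth_eq_of_ringEquiv e, h]

end CMDefect

section Kang

open RingTheory.Sequence IsLocalRing

variable {A : Type u} [CommRing A]

theorem idealDepth_self_eq_idealDepth_quotient_add_length [IsNoetherianRing A] {I : Ideal A}
    (hI : I ≠ ⊤) {rs : List A} (hmem : ∀ r ∈ rs, r ∈ I) (hrs : IsWeaklyRegular A rs) :
    idealDepth A I A = idealDepth A I (A ⧸ Ideal.ofList rs) + rs.length := by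
  rw [idealDepth_eq_idealDepth_quotient_ofList_add_length (by simpa using hI) hmem hrs]
  congr 1
  exact idealDepth_congr_linearEquiv (Submodule.quotEquivOfEq _ _ (by simp))

section AtPrime

variable (P : Ideal A) [P.IsPrime]

theorem height_maximalIdeal_localization :
    (maximalIdeal (Localization.AtPrime P)).height = P.height := by
  have := IsLocalization.AtPrime.ringKrullDim_eq_height P (Localization.AtPrime P)
  rw [← maximalIdeal_height_eq_ringKrullDim] at this
  exact_mod_cast this

variable {P} [IsNoetherianRing A]

theorem localDepth_localization_eq_add_length {rs : List A} (hmem : ∀ r ∈ rs, r ∈ P)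
    (hrs : IsWeaklyRegular A rs) :
    localDepth (Localization.AtPrime P) (Localization.AtPrime P) =
      localDepth (Localization.AtPrime P)
        (Localization.AtPrime P ⧸ (Ideal.ofList rs).map (algebraMap A (Localization.AtPrime P))) +
        rs.length := by
  have hreg := hrs.isRegular_of_isLocalization_of_mem (Localization.AtPrime P) P hmem
  have := idealDepth_self_eq_idealDepth_quotient_add_length
    (maximalIdeal.isMaximal (Localization.AtPrime P)).ne_top
    (by simpa only [List.mem_map, forall_exists_index, and_imp, forall_apply_eq_imp_iff₂,
      IsLocalization.AtPrime.to_map_mem_maximal_iff (Localization.AtPrime P) P] using hmem)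
    hreg.toIsWeaklyRegular
  rw [← Ideal.map_ofList, List.length_map] at this
  exact this

theorem length_le_localDepth_localization {rs : List A} (hmem : ∀ r ∈ rs, r ∈ P)
    (hrs : IsWeaklyRegular A rs) :
    rs.length ≤ localDepth (Localization.AtPrime P) (Localization.AtPrime P) := by
  rw [localDepth_localization_eq_add_length hmem hrs]
  exact le_add_self

theorem idealDepth_le_localDepth_localization :
    idealDepth A P A ≤ localDepth (Localization.AtPrime P) (Localization.AtPrime P) := by
  refine sSup_le ?_
  rintro _ ⟨rs, rfl, hmem, hrs⟩
  exact length_le_localDepth_localization hmem hrs.toIsWeaklyRegular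

theorem localDepth_localization_eq_length_of_mem_associatedPrimes {rs : List A}
    (hmem : ∀ r ∈ rs, r ∈ P) (hrs : IsWeaklyRegular A rs)
    (hP : P ∈ associatedPrimes A (A ⧸ Ideal.ofList rs)) :
    localDepth (Localization.AtPrime P) (Localization.AtPrime P) = rs.length := by
  rw [localDepth_localization_eq_add_length hmem hrs]
  obtain ⟨-, z, hz⟩ := isAssociatedPrime_iff.mp hP
  obtain ⟨a, rfl⟩ := Ideal.Quotient.mk_surjective z
  have hcolon (x : A) : x ∈ P ↔ x * a ∈ Ideal.ofList rs := by
    conv_lhs => rw [hz]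
    rw [Submodule.mem_colon_singleton, Submodule.mem_bot, ← Ideal.Quotient.eq_zero_iff_mem]
    rfl
  suffices h : localDepth (Localization.AtPrime P)
      (Localization.AtPrime P ⧸ (Ideal.ofList rs).map (algebraMap A (Localization.AtPrime P))) = 0 by
    rw [h, zero_add]
  refine idealDepth_eq_zero_of_smul_eq_zero
    (z := Ideal.Quotient.mk _ (algebraMap A (Localization.AtPrime P) a)) ?_ ?_
  · rw [Ne, Ideal.Quotient.eq_zero_iff_mem,
      IsLocalization.algebraMap_mem_map_algebraMap_iff P.primeCompl]
    rintro ⟨m, hm, h⟩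
    exact hm ((hcolon m).mpr h)
  · intro x hx
    have : maximalIdeal (Localization.AtPrime P) ≤
        ((Ideal.ofList rs).map (algebraMap A (Localization.AtPrime P))).colon
          {algebraMap A (Localization.AtPrime P) a} := by
      rw [← Localization.AtPrime.map_eq_maximalIdeal, Ideal.map_le_iff_le_comap]
      intro y hy
      rw [Ideal.mem_comap, Submodule.mem_colon_singleton, smul_eq_mul, ← map_mul]
      exact Ideal.mem_map_of_mem _ ((hcolon y).mp hy)
    have := Submodule.mem_colon_singleton.mp (this hx)
    exact Ideal.Quotient.eq_zero_iff_mem.mpr this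

theorem mem_associatedPrimes_of_localDepth_localization_eq_length {rs : List A}
    (hmem : ∀ r ∈ rs, r ∈ P) (hrs : IsWeaklyRegular A rs)
    (h : localDepth (Localization.AtPrime P) (Localization.AtPrime P) = rs.length) :
    P ∈ associatedPrimes A (A ⧸ Ideal.ofList rs) := by
  set S := Localization.AtPrime P
  rw [localDepth_localization_eq_add_length hmem hrs] at h
  have hle : (Ideal.ofList rs).map (algebraMap A S) ≤ maximalIdeal S := by
    rw [← Localization.AtPrime.map_eq_maximalIdeal]
    exact Ideal.map_mono (Ideal.span_le.mpr hmem)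
  have hnt : Nontrivial (S ⧸ (Ideal.ofList rs).map (algebraMap A S)) :=
    Ideal.Quotient.nontrivial_iff.mpr (ne_top_of_le_ne_top (maximalIdeal.isMaximal S).ne_top hle)
  have h0 : localDepth S (S ⧸ (Ideal.ofList rs).map (algebraMap A S)) = 0 := by
    generalize localDepth S (S ⧸ (Ideal.ofList rs).map (algebraMap A S)) = d at h
    exact (ENat.add_left_injective_of_ne_top (ENat.natCast_ne_top rs.length)) (by simpa using h)
  obtain ⟨z, hz, hzm⟩ := exists_ne_zero_smul_eq_zero_of_idealDepth_eq_zero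
    (Submodule.top_ne_ideal_smul_of_le_jacobson_annihilator
      (maximalIdeal_le_jacobson _)).symm h0
  obtain ⟨z, rfl⟩ := Ideal.Quotient.mk_surjective z
  obtain ⟨⟨a, s⟩, hs⟩ := IsLocalization.surj P.primeCompl z
  have hunit := IsLocalization.map_units S s
  have ha : algebraMap A S a ∉ (Ideal.ofList rs).map (algebraMap A S) := by
    rwa [← hs, Ideal.mul_unit_mem_iff_mem _ hunit, ← Ideal.Quotient.eq_zero_iff_mem]
  have hmul : ∀ y ∈ P, ∃ m ∈ P.primeCompl, m * (y * a) ∈ Ideal.ofList rs := by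
    intro y hy
    rw [← IsLocalization.algebraMap_mem_map_algebraMap_iff P.primeCompl S, map_mul, ← hs,
      ← mul_assoc]
    refine Ideal.mul_mem_right _ _ ?_
    exact Ideal.Quotient.eq_zero_iff_mem.mp
      (hzm (algebraMap A S y) ((IsLocalization.AtPrime.to_map_mem_maximal_iff S P y).mpr hy))
  obtain ⟨m, hm, hmP⟩ : ∃ m ∈ P.primeCompl, ∀ y ∈ P, m * (y * a) ∈ Ideal.ofList rs := by
    obtain ⟨G, hG⟩ := (isNoetherianRing_iff_ideal_fg A).mp ‹_› P
    choose! m hm hmG using hmul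
    refine ⟨∏ y ∈ G, m y, prod_mem fun y hy => hm y (hG ▸ Ideal.subset_span hy), ?_⟩
    have : P ≤ (Ideal.ofList rs).colon {(∏ y ∈ G, m y) * a} := by
      rw [← hG]
      refine Ideal.span_le.mpr fun y hy => ?_
      have hy' : y ∈ P := hG ▸ Ideal.subset_span hy
      obtain ⟨c, hc⟩ := Finset.dvd_prod_of_mem m hy
      rw [SetLike.mem_coe, Submodule.mem_colon_singleton, hc]
      have := Ideal.mul_mem_left _ c (hmG y hy')
      convert this using 1
      simp only [smul_eq_mul]; ring
    intro y hy
    have := Submodule.mem_colon_singleton.mp (this hy)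
    convert this using 1
    simp only [smul_eq_mul]; ring
  refine isAssociatedPrime_iff.mpr ⟨inferInstance, Ideal.Quotient.mk _ (m * a), ?_⟩
  ext y
  have hcolon : y ∈ (⊥ : Submodule A (A ⧸ Ideal.ofList rs)).colon
      {Ideal.Quotient.mk (Ideal.ofList rs) (m * a)} ↔ y * (m * a) ∈ Ideal.ofList rs := by
    rw [Submodule.mem_colon_singleton, Submodule.mem_bot, ← Ideal.Quotient.eq_zero_iff_mem]
    rfl
  rw [hcolon]
  constructor
  · intro hy
    convert hmP y hy using 1
    ring
  · intro hy
    by_contra hyP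
    refine ha ((IsLocalization.algebraMap_mem_map_algebraMap_iff P.primeCompl S _ a).mpr
      ⟨y * m, mul_mem hyP hm, ?_⟩)
    rwa [mul_assoc]

end AtPrime

theorem isAlmostCMRing_iff :
    IsAlmostCMRing A ↔ ∀ (P : Ideal A) [P.IsPrime],
      idealDepth A P A = localDepth (Localization.AtPrime P) (Localization.AtPrime P) := by
  constructor
  · intro h P hP
    have : Nontrivial A := ⟨⟨0, 1, fun h => hP.ne_top ((Ideal.eq_top_iff_one _).mpr
      (h ▸ P.zero_mem))⟩⟩
    rw [h ⟨P, hP⟩ (by simp [Module.support_eq_zeroLocus, Module.annihilator_eq_bot.mpr]), depthAt_self_eq_localDepth]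
  · intro h P _
    rw [h P.asIdeal, depthAt_self_eq_localDepth]

variable [IsNoetherianRing A]

theorem isAlmostCMRing_of_cmDefect_le_one
    (h : ∀ (P : Ideal A) [P.IsPrime], cmDefect (Localization.AtPrime P) ≤ 1) :
    IsAlmostCMRing A := by
  refine isAlmostCMRing_iff.mpr fun P _ => ?_
  have hP : P ≠ ⊤ := Ideal.IsPrime.ne_top'
  have : Nontrivial A := nontrivial_of_ideal_smul_ne_top (I := P) (by simpa using hP)
  refine le_antisymm idealDepth_le_localDepth_localization (not_lt.mp fun hlt => ?_)
  obtain ⟨n, hn⟩ := ENat.ne_top_iff_exists.mp hlt.ne_top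
  obtain ⟨rs, rfl, hmem, hrs⟩ := natCast_le_idealDepth_iff.mp hn.le
  have h1 := idealDepth_self_eq_idealDepth_quotient_add_length hP hmem hrs.toIsWeaklyRegular
  have h0 : idealDepth A P (A ⧸ Ideal.ofList rs) = 0 :=
    ENat.add_left_injective_of_ne_top (ENat.natCast_ne_top rs.length)
      (by simpa [← hn] using h1.symm)
  have hne : P • (⊤ : Submodule A (A ⧸ Ideal.ofList rs)) ≠ ⊤ := by
    have hle : Ideal.ofList rs ≤ P := Ideal.span_le.mpr hmem
    intro htop
    have := congrArg (Submodule.comap (Submodule.mkQ (Ideal.ofList rs))) htop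
    rw [Submodule.comap_smul_top_of_surjective P _ (Submodule.mkQ_surjective _)] at this
    simp [hle, hP] at this
  obtain ⟨Q, hQ, hPQ⟩ := exists_associatedPrime_of_idealDepth_eq_zero hne h0
  have := hQ.isPrime
  have hdQ := localDepth_localization_eq_length_of_mem_associatedPrimes
    (fun r hr => hPQ (hmem r hr)) hrs.toIsWeaklyRegular hQ
  rcases hPQ.eq_or_lt with rfl | hPQ
  · rw [hdQ, ← hn] at hlt
    exact lt_irrefl _ hlt
  · have hP1 := localDepth_le_height (Localization.AtPrime P)
    have hQ1 := (cmDefect_le_iff _ 1).mp (h Q)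
    rw [height_maximalIdeal_localization] at hP1 hQ1
    rw [hdQ] at hQ1
    rw [← hn] at hlt
    have h2 := Ideal.height_add_one_le_of_lt_of_isPrime hPQ
    have h3 : (rs.length : ℕ∞) + 1 ≤ P.height := (Order.add_one_le_of_lt hlt).trans hP1
    have h4 : (rs.length : ℕ∞) + 1 + 1 ≤ rs.length + 1 :=
      (add_le_add_left h3 1).trans (h2.trans (by simpa using hQ1))
    norm_cast at h4
    omega

open scoped Classical in
theorem cmDefect_le_one_of_isAlmostCMRing (h : IsAlmostCMRing A) (P : Ideal A) [P.IsPrime] :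
    cmDefect (Localization.AtPrime P) ≤ 1 := by
  rw [isAlmostCMRing_iff] at h
  have hP : P ≠ ⊤ := Ideal.IsPrime.ne_top'
  have : Nontrivial A := nontrivial_of_ideal_smul_ne_top (I := P) (by simpa using hP)
  obtain ⟨n, hn⟩ := ENat.ne_top_iff_exists.mp (localDepth_ne_top (Localization.AtPrime P))
  obtain ⟨rs, rfl, hmem, hrs⟩ := natCast_le_idealDepth_iff.mp (hn.le.trans (h P).ge)
  have key (Q : Ideal A) (hQ : Q.IsPrime) (hQP : Q ≤ P) (hmemQ : ∀ r ∈ rs, r ∈ Q) :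
      Q ∈ associatedPrimes A (A ⧸ Ideal.ofList rs) := by
    refine mem_associatedPrimes_of_localDepth_localization_eq_length hmemQ
      hrs.toIsWeaklyRegular (le_antisymm ?_ (length_le_localDepth_localization hmemQ
        hrs.toIsWeaklyRegular))
    rw [hn, ← h Q, ← h P]
    exact idealDepth_mono hQP
  obtain ⟨y, hyP, hy⟩ : ∃ y ∈ P, ∀ Q ∈ associatedPrimes A (A ⧸ Ideal.ofList rs), Q < P → y ∉ Q := by
    by_contra! hcon
    have hsub : (P : Set A) ⊆
        ⋃ Q ∈ {Q ∈ associatedPrimes A (A ⧸ Ideal.ofList rs) | Q < P}, (Q : Set A) := by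
      intro y hy
      obtain ⟨Q, hQ, hlt, hyQ⟩ := hcon y hy
      exact Set.mem_biUnion (show Q ∈ {Q ∈ associatedPrimes A (A ⧸ Ideal.ofList rs) | Q < P} from
        ⟨hQ, hlt⟩) hyQ
    obtain ⟨Q, hQ, hle⟩ := (Ideal.subset_union_prime_finite
      ((associatedPrimes.finite A (A ⧸ Ideal.ofList rs)).subset fun _ hQ => hQ.1) (f := id) ⊥ ⊥
      (fun P hP _ _ => hP.1.isPrime)).mp hsub
    exact absurd hQ.2 (not_lt_of_ge hle)
  have hmin : P ∈ (Ideal.span ((y :: rs).toFinset : Set A)).minimalPrimes := by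
    refine ⟨⟨inferInstance, Ideal.span_le.mpr ?_⟩, ?_⟩
    · intro x hx
      simp only [List.coe_toFinset, List.mem_cons, Set.mem_ofPred_eq] at hx
      rcases hx with rfl | hx
      exacts [hyP, hmem x hx]
    · rintro Q ⟨hQ, hspan⟩ hQP
      have hsub : ∀ x ∈ y :: rs, x ∈ Q := fun x hx => hspan (Ideal.subset_span (by simpa using hx))
      rcases hQP.eq_or_lt with rfl | hlt
      · exact le_rfl
      · exact absurd (hsub y (by simp))
          (hy Q (key Q hQ hQP fun r hr => hsub r (by simp [hr])) hlt)
  rw [cmDefect_le_iff, height_maximalIdeal_localization, ← hn]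
  refine (Ideal.height_le_card_of_mem_minimalPrimes_span_finset hmin).trans ?_
  exact_mod_cast List.toFinset_card_le (y :: rs)

end Kang

section FlatDepth

open RingTheory.Sequence IsLocalRing TensorProduct Pointwise

theorem localDepth_ne_top_of_finite (A : Type*) [CommRing A] [IsLocalRing A] [IsNoetherianRing A]
    (M : Type*) [AddCommGroup M] [Module A M] [Module.Finite A M] : localDepth A M ≠ ⊤ := by
  have hle : localDepth A M ≤ (maximalIdeal A).height := by
    refine sSup_le ?_
    rintro _ ⟨rs, rfl, hmem, hrs⟩
    have h := Module.supportDim_add_length_eq_supportDim_of_isRegular rs hrs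
    have : Nontrivial (M ⧸ (Ideal.ofList rs • ⊤ : Submodule A M)) :=
      Submodule.Quotient.nontrivial_iff.mpr hrs.top_ne_smul.symm
    have h0 : (0 : WithBot ℕ∞) ≤ Module.supportDim A (M ⧸ (Ideal.ofList rs • ⊤ : Submodule A M)) :=
      Order.krullDim_nonneg_iff.mpr Module.nonempty_support_of_nontrivial.to_subtype
    have h1 := (add_le_add_left h0 (rs.length : WithBot ℕ∞)).trans
      (h.le.trans (Module.supportDim_le_ringKrullDim A M))
    rw [zero_add, ← maximalIdeal_height_eq_ringKrullDim] at h1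
    exact_mod_cast h1
  exact ne_top_of_le_ne_top (height_maximalIdeal_ne_top A) hle

theorem maximalIdeal_smul_top_ne_top (A : Type*) [CommRing A] [IsLocalRing A]
    (M : Type*) [AddCommGroup M] [Module A M] [Module.Finite A M] [Nontrivial M] :
    maximalIdeal A • (⊤ : Submodule A M) ≠ ⊤ :=
  (Submodule.top_ne_ideal_smul_of_le_jacobson_annihilator (maximalIdeal_le_jacobson _)).symm

theorem isFiniteLength_quotient_maximalIdeal_pow (A : Type*) [CommRing A] [IsLocalRing A]
    [IsNoetherianRing A] (M : Type*) [AddCommGroup M] [Module A M] [Module.Finite A M] (n : ℕ) :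
    IsFiniteLength A (M ⧸ (maximalIdeal A ^ n • ⊤ : Submodule A M)) := by
  have hart : IsArtinianRing (A ⧸ maximalIdeal A ^ n) := by
    rw [isArtinianRing_iff_isNoetherianRing_krullDimLE_zero]
    refine ⟨inferInstance, Ring.krullDimLE_zero_iff.mpr fun P hP => ?_⟩
    have hle : maximalIdeal A ≤ P.comap (Ideal.Quotient.mk (maximalIdeal A ^ n)) := by
      refine Ideal.IsPrime.le_of_pow_le (n := n) ?_
      intro x hx
      simp [Ideal.mem_comap, Ideal.Quotient.eq_zero_iff_mem.mpr hx]
    have hmax : (P.comap (Ideal.Quotient.mk (maximalIdeal A ^ n))).IsMaximal := by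
      rw [← (maximalIdeal.isMaximal A).eq_of_le Ideal.IsPrime.ne_top' hle]
      infer_instance
    have := Ideal.map_comap_of_surjective _ Ideal.Quotient.mk_surjective P
    have hm := (Ideal.map_eq_top_or_isMaximal_of_surjective _ Ideal.Quotient.mk_surjective
      hmax).resolve_left (fun h => hP.ne_top (this.symm.trans h))
    rwa [this] at hm
  rw [isFiniteLength_iff_isNoetherian_isArtinian]
  refine ⟨inferInstance, ?_⟩
  have : Module.Finite (A ⧸ maximalIdeal A ^ n) (M ⧸ (maximalIdeal A ^ n • ⊤ : Submodule A M)) :=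
    Module.Finite.of_restrictScalars_finite A _ _
  have : IsArtinian (A ⧸ maximalIdeal A ^ n) (M ⧸ (maximalIdeal A ^ n • ⊤ : Submodule A M)) :=
    inferInstance
  exact isArtinian_of_surjective_algebraMap (R := A ⧸ maximalIdeal A ^ n)
    Ideal.Quotient.mk_surjective

variable {A : Type u} {C : Type v} [CommRing A] [CommRing C] [Algebra A C]
  {N : Type*} [AddCommGroup N] [Module A N] [Module C N] [IsScalarTower A C N]
  {M : Type*} [AddCommGroup M] [Module A M]

theorem finite_tensorProduct_left [Module.Finite C N] [Module.Finite A M] :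
    Module.Finite C (N ⊗[A] M) :=
  Module.Finite.equiv (AlgebraTensorModule.cancelBaseChange A C C N M)

section

variable [IsLocalRing A] [Module.Flat A N] {c : C}

theorem isSMulRegular_tensor_of_isFiniteLength
    (hc : IsSMulRegular (N ⊗[A] (A ⧸ maximalIdeal A)) c) (hM : IsFiniteLength A M) :
    IsSMulRegular (N ⊗[A] M) c := by
  induction hM with
  | of_subsingleton => exact fun _ _ _ => Subsingleton.elim _ _
  | @of_simple_quotient M _ _ M' _ _ ih =>
    refine isSMulRegular_of_range_eq_ker (f := AlgebraTensorModule.lTensor C N M'.subtype)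
      (g := AlgebraTensorModule.lTensor C N M'.mkQ)
      (Module.Flat.lTensor_preserves_injective_linearMap M'.subtype M'.injective_subtype) ?_ ih ?_
    · ext x
      exact ((lTensor_exact N (LinearMap.exact_subtype_mkQ M') M'.mkQ_surjective) x).symm
    · obtain ⟨I, hI, ⟨e⟩⟩ := isSimpleModule_iff_quot_maximal.mp
        (inferInstance : IsSimpleModule A (M ⧸ M'))
      obtain rfl := IsLocalRing.eq_maximalIdeal hI
      exact ((AlgebraTensorModule.congr (LinearEquiv.refl C N) e).isSMulRegular_congr c).mpr hc

variable [IsNoetherianRing A] [IsLocalRing C] [IsLocalHom (algebraMap A C)] [IsNoetherianRing C]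
  [Module.Finite C N]

theorem isSMulRegular_tensor_of_isSMulRegular_residue [Module.Finite A M]
    (hc : IsSMulRegular (N ⊗[A] (A ⧸ maximalIdeal A)) c) :
    IsSMulRegular (N ⊗[A] M) c := by
  have := finite_tensorProduct_left (A := A) (C := C) (N := N) (M := M)
  rw [isSMulRegular_iff_right_eq_zero_of_smul]
  intro z hz
  have hmem : z ∈ (⨅ i, maximalIdeal C ^ i • ⊤ : Submodule C (N ⊗[A] M)) := by
    refine Submodule.mem_iInf _ |>.mpr fun n => ?_
    set L : Submodule A M := maximalIdeal A ^ n • ⊤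
    have hreg := isSMulRegular_tensor_of_isFiniteLength hc
      (isFiniteLength_quotient_maximalIdeal_pow A M n)
    have hz0 : AlgebraTensorModule.lTensor C N L.mkQ z = 0 := by
      refine hreg.right_eq_zero_of_smul ?_
      rw [← map_smul, hz, map_zero]
    obtain ⟨w, rfl⟩ := ((lTensor_exact N (LinearMap.exact_subtype_mkQ L) L.mkQ_surjective) z).mp hz0
    clear hz hz0
    induction w using TensorProduct.induction_on with
    | zero => simp
    | add x y hx hy => rw [map_add]; exact add_mem hx hy
    | tmul x y =>
      obtain ⟨y, hy⟩ := y
      rw [LinearMap.lTensor_tmul, Submodule.subtype_apply]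
      refine Submodule.smul_induction_on (p := fun y => x ⊗ₜ[A] y ∈
        (maximalIdeal C ^ n • ⊤ : Submodule C (N ⊗[A] M))) hy ?_ ?_
      · intro r hr m _
        rw [TensorProduct.tmul_smul, ← algebraMap_smul C r]
        refine Submodule.smul_mem_smul ?_ trivial
        have := Ideal.mem_map_of_mem (algebraMap A C) hr
        rw [Ideal.map_pow] at this
        exact Ideal.pow_right_mono (((local_hom_TFAE (algebraMap A C)).out 0 2 rfl rfl).mp
          inferInstance) n this
      · intro a b ha hb
        rw [TensorProduct.tmul_add]
        exact add_mem ha hb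
  rwa [Ideal.iInf_pow_smul_eq_bot_of_isLocalRing _ (maximalIdeal.isMaximal C).ne_top,
    Submodule.mem_bot] at hmem

end

/-- If the kernel of a surjective linear map `f : X → Y` is `c X`, then `X / c X ≃ Y`. -/
def quotSMulTopEquivOfKer {X Y : Type*} [AddCommGroup X] [AddCommGroup Y] [Module C X] [Module C Y]
    {c : C} (f : X →ₗ[C] Y) (hf : Function.Surjective f)
    (h : ∀ x, f x = 0 ↔ ∃ y, c • y = x) : QuotSMulTop c X ≃ₗ[C] Y :=
  (Submodule.quotEquivOfEq _ _ (by
    ext x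
    rw [LinearMap.mem_ker, h, Submodule.mem_smul_pointwise_iff_exists]
    simp)).trans (f.quotKerEquivOfSurjective hf)

theorem AlgebraTensorModule.rTensor_eq_zero_iff_of_exact_smul {N' : Type*} [AddCommGroup N']
    [Module A N'] [Module C N'] [IsScalarTower A C N'] (f : N →ₗ[C] N')
    (hf : Function.Surjective f) {c : C} (hc : ∀ n, f n = 0 ↔ ∃ y, c • y = n) (x : N ⊗[A] M) :
    AlgebraTensorModule.rTensor A M f x = 0 ↔ ∃ y, c • y = x := by
  have hex : Function.Exact ((LinearMap.lsmul C N c).restrictScalars A) (f.restrictScalars A) := hc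
  have := rTensor_exact M hex hf x
  have h (y : N ⊗[A] M) :
      LinearMap.rTensor M ((LinearMap.lsmul C N c).restrictScalars A) y = c • y := by
    induction y using TensorProduct.induction_on with
    | zero => simp
    | add x y hx hy => rw [map_add, hx, hy, smul_add]
    | tmul x y => simp [TensorProduct.smul_tmul']
  simp only [Set.mem_range, h] at this
  exact this

theorem AlgebraTensorModule.rTensor_surjective {N' : Type*} [AddCommGroup N']
    [Module A N'] [Module C N'] [IsScalarTower A C N'] (f : N →ₗ[C] N')
    (hf : Function.Surjective f) : Function.Surjective (AlgebraTensorModule.rTensor A M f) :=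
  LinearMap.rTensor_surjective M (g := f.restrictScalars A) hf

variable (A N M) in
/-- The reduction map `N ⊗ M → N / c N ⊗ M`. -/
def quotSMulTopRTensor (c : C) : N ⊗[A] M →ₗ[C] QuotSMulTop c N ⊗[A] M :=
  AlgebraTensorModule.rTensor A M (Submodule.mkQ (c • ⊤ : Submodule C N))

theorem quotSMulTopRTensor_surjective (c : C) :
    Function.Surjective (quotSMulTopRTensor A N M c) :=
  AlgebraTensorModule.rTensor_surjective _ (Submodule.mkQ_surjective _)

theorem quotSMulTopRTensor_eq_zero_iff (c : C) (x : N ⊗[A] M) :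
    quotSMulTopRTensor A N M c x = 0 ↔ ∃ y, c • y = x :=
  AlgebraTensorModule.rTensor_eq_zero_iff_of_exact_smul _ (Submodule.mkQ_surjective _)
    (fun n => LinearMap.exact_lsmul_mkQ_smul_top N c n) x

/-- Tensor products commute with reduction modulo an element acting on the left factor. -/
def quotSMulTopTensorEquivLeft (c : C) :
    QuotSMulTop c (N ⊗[A] M) ≃ₗ[C] QuotSMulTop c N ⊗[A] M :=
  quotSMulTopEquivOfKer _ (quotSMulTopRTensor_surjective c) (quotSMulTopRTensor_eq_zero_iff c)

/-- Tensor products commute with reduction modulo an element acting on the right factor. -/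
def quotSMulTopTensorEquivRight (a : A) :
    QuotSMulTop (algebraMap A C a) (N ⊗[A] M) ≃ₗ[C] N ⊗[A] QuotSMulTop a M :=
  quotSMulTopEquivOfKer (AlgebraTensorModule.lTensor C N (Submodule.mkQ (a • ⊤ : Submodule A M)))
    (LinearMap.lTensor_surjective N (Submodule.mkQ_surjective _)) (fun x => by
      refine Iff.trans (lTensor_exact N (LinearMap.exact_lsmul_mkQ_smul_top M a)
        (Submodule.mkQ_surjective _) x) (exists_congr fun y => ?_)
      suffices h : LinearMap.lTensor N (LinearMap.lsmul A M a) y = algebraMap A C a • y by rw [h]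
      induction y using TensorProduct.induction_on with
      | zero => simp
      | add x y hx hy => rw [map_add, hx, hy, smul_add]
      | tmul x y => simp)

theorem flat_quotSMulTop_of_isSMulRegular [Module.Flat A N] {c : C}
    (hc : ∀ I : Ideal A, IsSMulRegular (N ⊗[A] (A ⧸ I)) c) :
    Module.Flat A (QuotSMulTop c N) := by
  rw [Module.Flat.iff_lTensor_injective']
  intro I
  rw [injective_iff_map_eq_zero]
  intro w hw
  have hnat (z : N ⊗[A] I) : quotSMulTopRTensor A N A c (LinearMap.lTensor N I.subtype z) =
      LinearMap.lTensor (QuotSMulTop c N) I.subtype (quotSMulTopRTensor A N I c z) := by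
    induction z using TensorProduct.induction_on with
    | zero => simp
    | add x y hx hy => simp only [map_add, hx, hy]
    | tmul x y => rfl
  obtain ⟨w, rfl⟩ := quotSMulTopRTensor_surjective c w
  rw [← hnat, quotSMulTopRTensor_eq_zero_iff] at hw
  obtain ⟨v, hv⟩ := hw
  have hex := lTensor_exact N (LinearMap.exact_subtype_mkQ I) I.mkQ_surjective
  have hv0 : AlgebraTensorModule.lTensor C N I.mkQ v = 0 := by
    refine (hc I).right_eq_zero_of_smul ?_
    rw [← map_smul, hv]
    exact hex.apply_apply_eq_zero w
  obtain ⟨v, rfl⟩ := (hex v).mp hv0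
  refine (quotSMulTopRTensor_eq_zero_iff c w).mpr ⟨v, ?_⟩
  refine Module.Flat.lTensor_preserves_injective_linearMap I.subtype I.injective_subtype ?_
  exact ((AlgebraTensorModule.lTensor C N I.subtype).map_smul c v).trans hv

end FlatDepth

section FlatLocal

open IsLocalRing TensorProduct

theorem faithfullyFlat_of_isLocalHom {A C : Type*} [CommRing A] [CommRing C] [Algebra A C]
    [IsLocalRing A] [IsLocalRing C] [IsLocalHom (algebraMap A C)]
    (N : Type*) [AddCommGroup N] [Module A N] [Module C N] [IsScalarTower A C N]
    [Module.Flat A N] [Module.Finite C N] [Nontrivial N] : Module.FaithfullyFlat A N := by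
  refine ⟨fun m hm htop => maximalIdeal_smul_top_ne_top C N ?_⟩
  obtain rfl := IsLocalRing.eq_maximalIdeal hm
  have hmap : (maximalIdeal A).map (algebraMap A C) ≤ maximalIdeal C :=
    ((local_hom_TFAE (algebraMap A C)).out 0 2 rfl rfl).mp inferInstance
  have hle : (maximalIdeal A • ⊤ : Submodule A N) ≤
      (maximalIdeal C • ⊤ : Submodule C N).restrictScalars A := by
    refine Submodule.smul_le.mpr fun r hr n _ => ?_
    rw [Submodule.restrictScalars_mem, ← algebraMap_smul C r n]
    exact Submodule.smul_mem_smul (hmap (Ideal.mem_map_of_mem _ hr)) Submodule.mem_top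
  rw [htop, top_le_iff] at hle
  rwa [Submodule.restrictScalars_eq_top_iff] at hle

variable {A : Type u} {C : Type v} [CommRing A] [CommRing C] [Algebra A C]
  [IsLocalRing A] [IsLocalRing C] [IsLocalHom (algebraMap A C)]

theorem algebraMap_mem_maximalIdeal {a : A} (ha : a ∈ maximalIdeal A) :
    algebraMap A C a ∈ maximalIdeal C :=
  ((local_hom_TFAE (algebraMap A C)).out 0 2 rfl rfl).mp inferInstance (Ideal.mem_map_of_mem _ ha)

variable [IsNoetherianRing A] [IsNoetherianRing C]

theorem localDepth_tensorProduct_of_localDepth_fiber_eq_zero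
    {N : Type v} [AddCommGroup N] [Module A N] [Module C N] [IsScalarTower A C N]
    [Module.Flat A N] [Module.Finite C N] [Nontrivial N]
    (hN : localDepth C (N ⊗[A] (A ⧸ maximalIdeal A)) = 0) (d : ℕ)
    (M : Type u) [AddCommGroup M] [Module A M] [Module.Finite A M] [Nontrivial M]
    (hM : localDepth A M = d) :
    localDepth C (N ⊗[A] M) = d := by
  have := faithfullyFlat_of_isLocalHom (A := A) (C := C) N
  induction d generalizing M with
  | zero =>
    obtain ⟨z, hz, hmz⟩ := exists_ne_zero_smul_eq_zero_of_idealDepth_eq_zero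
      (maximalIdeal_smul_top_ne_top A M) hM
    have := finite_tensorProduct_left (A := A) (C := C) (N := N) (M := A ⧸ maximalIdeal A)
    have := Module.FaithfullyFlat.lTensor_nontrivial A N (A ⧸ maximalIdeal A)
    obtain ⟨w, hw, hmw⟩ := exists_ne_zero_smul_eq_zero_of_idealDepth_eq_zero
      (maximalIdeal_smul_top_ne_top C (N ⊗[A] (A ⧸ maximalIdeal A))) hN
    let f : (A ⧸ maximalIdeal A) →ₗ[A] M :=
      Submodule.liftQ _ (LinearMap.toSpanSingleton A M z) fun x hx => hmz x hx
    have hker : LinearMap.ker (LinearMap.toSpanSingleton A M z) = maximalIdeal A := by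
      refine ((maximalIdeal.isMaximal A).eq_of_le ?_ fun x hx => hmz x hx).symm
      rw [Ne, Ideal.eq_top_iff_one]
      simpa using hz
    have hf : Function.Injective f := by
      rw [← LinearMap.ker_eq_bot]
      exact Submodule.ker_liftQ_eq_bot _ _ _ hker.le
    have hF : Function.Injective (AlgebraTensorModule.lTensor C N f) :=
      Module.Flat.lTensor_preserves_injective_linearMap f hf
    refine idealDepth_eq_zero_of_smul_eq_zero (z := AlgebraTensorModule.lTensor C N f w) ?_ ?_
    · rwa [Ne, map_eq_zero_iff _ hF]
    · intro x hx
      rw [← map_smul, hmw x hx, map_zero]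
  | succ d ih =>
    obtain ⟨x, hx, hreg⟩ := exists_mem_isSMulRegular_of_idealDepth_ne_zero (A := A)
      (I := maximalIdeal A) (M := M) (by
        change localDepth A M ≠ 0
        rw [hM]
        exact_mod_cast d.succ_ne_zero)
    have htop := maximalIdeal_smul_top_ne_top A M
    have h1 : localDepth A M = localDepth A (QuotSMulTop x M) + 1 :=
      idealDepth_eq_idealDepth_quotSMulTop_add_one htop hx hreg
    have : Nontrivial (QuotSMulTop x M) :=
      nontrivial_of_ideal_smul_ne_top (ideal_smul_quotSMulTop_ne_top hx htop)
    have h2 := ih (QuotSMulTop x M) (by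
      rw [hM, Nat.cast_succ] at h1
      exact (ENat.add_left_injective_of_ne_top (n := 1) (by simp) h1).symm)
    have := finite_tensorProduct_left (A := A) (C := C) (N := N) (M := M)
    have := Module.FaithfullyFlat.lTensor_nontrivial A N M
    have h3 : localDepth C (N ⊗[A] M) =
        localDepth C (QuotSMulTop (algebraMap A C x) (N ⊗[A] M)) + 1 :=
      idealDepth_eq_idealDepth_quotSMulTop_add_one
        (maximalIdeal_smul_top_ne_top C (N ⊗[A] M)) (algebraMap_mem_maximalIdeal hx)
        (fun a b hab => hreg.lTensor N (by simpa using hab))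
    rw [h3, Nat.cast_succ, ← h2]
    congr 1
    exact idealDepth_congr_linearEquiv (quotSMulTopTensorEquivRight x)

theorem localDepth_tensorProduct_eq_add
    (N : Type v) [AddCommGroup N] [Module A N] [Module C N] [IsScalarTower A C N]
    [Module.Flat A N] [Module.Finite C N] [Nontrivial N]
    (M : Type u) [AddCommGroup M] [Module A M] [Module.Finite A M] [Nontrivial M] :
    localDepth C (N ⊗[A] M) =
      localDepth A M + localDepth C (N ⊗[A] (A ⧸ maximalIdeal A)) := by
  have := finite_tensorProduct_left (A := A) (C := C) (N := N) (M := A ⧸ maximalIdeal A)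
  obtain ⟨n, hn⟩ := ENat.ne_top_iff_exists.mp
    (localDepth_ne_top_of_finite C (N ⊗[A] (A ⧸ maximalIdeal A)))
  induction n generalizing N with
  | zero =>
    obtain ⟨d, hd⟩ := ENat.ne_top_iff_exists.mp (localDepth_ne_top_of_finite A M)
    rw [← hn, localDepth_tensorProduct_of_localDepth_fiber_eq_zero hn.symm d M hd.symm, ← hd]
    simp
  | succ n ih =>
    have := faithfullyFlat_of_isLocalHom (A := A) (C := C) N
    obtain ⟨c, hc, hreg⟩ := exists_mem_isSMulRegular_of_idealDepth_ne_zero (A := C)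
      (I := maximalIdeal C) (M := N ⊗[A] (A ⧸ maximalIdeal A)) (by
        change localDepth C _ ≠ 0
        rw [← hn]
        exact_mod_cast n.succ_ne_zero)
    have hNtop := maximalIdeal_smul_top_ne_top C N
    have : Nontrivial (QuotSMulTop c N) :=
      nontrivial_of_ideal_smul_ne_top (ideal_smul_quotSMulTop_ne_top hc hNtop)
    have : Module.Flat A (QuotSMulTop c N) :=
      flat_quotSMulTop_of_isSMulRegular fun I =>
        isSMulRegular_tensor_of_isSMulRegular_residue hreg
    have key (X : Type u) [AddCommGroup X] [Module A X] [Module.Finite A X] [Nontrivial X] :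
        localDepth C (N ⊗[A] X) = localDepth C (QuotSMulTop c N ⊗[A] X) + 1 := by
      have := finite_tensorProduct_left (A := A) (C := C) (N := N) (M := X)
      have := Module.FaithfullyFlat.lTensor_nontrivial A N X
      have h3 : localDepth C (N ⊗[A] X) = localDepth C (QuotSMulTop c (N ⊗[A] X)) + 1 :=
        idealDepth_eq_idealDepth_quotSMulTop_add_one
          (maximalIdeal_smul_top_ne_top C (N ⊗[A] X)) hc
          (isSMulRegular_tensor_of_isSMulRegular_residue hreg)
      rw [h3]
      congr 1
      exact idealDepth_congr_linearEquiv (quotSMulTopTensorEquivLeft c)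
    rw [key M, key (A ⧸ maximalIdeal A), ← add_assoc]
    congr 1
    refine ih (QuotSMulTop c N) finite_tensorProduct_left ?_
    rw [key, Nat.cast_succ] at hn
    exact ENat.add_left_injective_of_ne_top (n := 1) (by simp) hn

end FlatLocal

section CMDefectFlat

open IsLocalRing TensorProduct

variable {A : Type u} {C : Type v} [CommRing A] [CommRing C] [Algebra A C]
  [IsLocalRing A] [IsLocalRing C] [IsLocalHom (algebraMap A C)]

theorem isNoetherianRing_of_faithfullyFlat (A C : Type*) [CommRing A] [CommRing C] [Algebra A C]
    [Module.FaithfullyFlat A C] [IsNoetherianRing C] : IsNoetherianRing A := by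
  rw [isNoetherianRing_iff, isNoetherian_iff']
  exact (OrderEmbedding.ofMapLEIff (fun I : Ideal A => I.map (algebraMap A C)) fun I J => by
    refine ⟨fun h => ?_, fun h => Ideal.map_mono h⟩
    have := Ideal.comap_mono (f := algebraMap A C) h
    rwa [Ideal.comap_map_eq_self_of_faithfullyFlat, Ideal.comap_map_eq_self_of_faithfullyFlat]
      at this).wellFoundedGT

/-- The Cohen-Macaulay defect is additive along flat local homomorphisms. -/
theorem cmDefect_eq_add_of_flat [IsNoetherianRing A] [IsNoetherianRing C] [Module.Flat A C]
    [IsLocalRing (C ⧸ (maximalIdeal A).map (algebraMap A C))] :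
    cmDefect C = cmDefect A + cmDefect (C ⧸ (maximalIdeal A).map (algebraMap A C)) := by
  set I := (maximalIdeal A).map (algebraMap A C) with hI
  have hmax : (maximalIdeal (C ⧸ I)).comap (Ideal.Quotient.mk I) = maximalIdeal C :=
    IsLocalRing.eq_maximalIdeal
      (Ideal.comap_isMaximal_of_surjective _ Ideal.Quotient.mk_surjective)
  have hdepth : localDepth C C = localDepth A A + localDepth (C ⧸ I) (C ⧸ I) := by
    have h1 : localDepth C (C ⊗[A] A) = localDepth C C :=
      idealDepth_congr_linearEquiv (AlgebraTensorModule.rid A C C)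
    have h2 : localDepth C (C ⊗[A] (A ⧸ maximalIdeal A)) = localDepth C (C ⧸ I) :=
      idealDepth_congr_linearEquiv
        (Algebra.TensorProduct.quotIdealMapEquivTensorQuot C (maximalIdeal A)).symm.toLinearEquiv
    have h3 : localDepth C (C ⧸ I) = localDepth (C ⧸ I) (C ⧸ I) := by
      unfold localDepth
      rw [← hmax]
      exact idealDepth_comap_eq_of_surjective _ Ideal.Quotient.mk_surjective (AddEquiv.refl _)
        (fun a m => rfl) _
    rw [← h1, ← h3, ← h2]
    exact localDepth_tensorProduct_eq_add C A
  have hheight : (maximalIdeal C).height =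
      (maximalIdeal A).height + (maximalIdeal (C ⧸ I)).height := by
    have := Algebra.HasGoingDown.of_flat (R := A) (S := C)
    have : (maximalIdeal C).LiesOver (maximalIdeal A) :=
      ⟨(((local_hom_TFAE (algebraMap A C)).out 0 4 rfl rfl).mp inferInstance).symm⟩
    rw [Ideal.height_eq_height_add_of_liesOver_of_hasGoingDown (maximalIdeal A) (maximalIdeal C),
      ← hI, ← hmax, Ideal.map_comap_of_surjective _ Ideal.Quotient.mk_surjective]
  rw [height_maximalIdeal_eq_localDepth_add_cmDefect, height_maximalIdeal_eq_localDepth_add_cmDefect,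
    height_maximalIdeal_eq_localDepth_add_cmDefect, hdepth] at hheight
  obtain ⟨a, ha⟩ := ENat.ne_top_iff_exists.mp (localDepth_ne_top A)
  obtain ⟨b, hb⟩ := ENat.ne_top_iff_exists.mp (localDepth_ne_top (C ⧸ I))
  rw [← ha, ← hb] at hheight
  norm_cast at hheight
  change cmDefect C = cmDefect A + cmDefect (C ⧸ I)
  omega

end CMDefectFlat

section Fiber

open IsLocalRing TensorProduct

variable {A : Type u} {T : Type v} [CommRing A] [CommRing T] [Algebra A T]

theorem isLocalHom_algebraMap_localization (p : Ideal A) [p.IsPrime] (Q : Ideal T) [Q.IsPrime]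
    [Q.LiesOver p] [Algebra (Localization.AtPrime p) (Localization.AtPrime Q)]
    [Localization.AtPrime.IsLiesOverAlgebra p Q] :
    IsLocalHom (algebraMap (Localization.AtPrime p) (Localization.AtPrime Q)) := by
  rw [Localization.AtPrime.IsLiesOverAlgebra.algebraMap_eq]
  infer_instance

theorem isNoetherianRing_localization_of_liesOver [Module.Flat A T] (p : Ideal A) [p.IsPrime]
    (Q : Ideal T) [Q.IsPrime] [Q.LiesOver p] [IsNoetherianRing (Localization.AtPrime Q)] :
    IsNoetherianRing (Localization.AtPrime p) := by
  let := Localization.AtPrime.algebraOfLiesOver p Q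
  have := isLocalHom_algebraMap_localization p Q
  have : Module.FaithfullyFlat (Localization.AtPrime p) (Localization.AtPrime Q) :=
    Module.FaithfullyFlat.of_flat_of_isLocalHom
  exact isNoetherianRing_of_faithfullyFlat _ (Localization.AtPrime Q)

theorem cmDefect_localization_comap_includeRight [Module.Flat A T] (p : Ideal A) [p.IsPrime]
    (q : Ideal (p.Fiber T)) [q.IsPrime]
    [IsNoetherianRing (Localization.AtPrime (q.comap Algebra.TensorProduct.includeRight))] :
    IsNoetherianRing (Localization.AtPrime q) ∧
      cmDefect (Localization.AtPrime (q.comap Algebra.TensorProduct.includeRight)) =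
        cmDefect (Localization.AtPrime p) + cmDefect (Localization.AtPrime q) := by
  let Q : Ideal T := q.comap Algebra.TensorProduct.includeRight
  let := Localization.AtPrime.algebraOfLiesOver p Q
  have := isLocalHom_algebraMap_localization p Q
  have := isNoetherianRing_localization_of_liesOver p Q
  have hmap : (maximalIdeal (Localization.AtPrime p)).map
      (algebraMap (Localization.AtPrime p) (Localization.AtPrime Q)) =
      p.map (algebraMap A (Localization.AtPrime Q)) := by
    rw [← Localization.AtPrime.map_eq_maximalIdeal, Ideal.map_map,
      ← IsScalarTower.algebraMap_eq]
  let e : Localization.AtPrime q ≃+* Localization.AtPrime Q ⧸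
      (maximalIdeal (Localization.AtPrime p)).map
        (algebraMap (Localization.AtPrime p) (Localization.AtPrime Q)) :=
    (Ideal.Fiber.localizationAlgEquivQuotient p q).toRingEquiv.trans
      (Ideal.quotEquivOfEq hmap.symm)
  have := e.isLocalRing
  refine ⟨isNoetherianRing_of_ringEquiv _ e.symm, ?_⟩
  have h := cmDefect_eq_of_ringEquiv (A := Localization.AtPrime q)
    (A' := Localization.AtPrime Q ⧸ (maximalIdeal (Localization.AtPrime p)).map
      (algebraMap (Localization.AtPrime p) (Localization.AtPrime Q))) e
  rw [h]
  exact cmDefect_eq_add_of_flat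

/-- For a flat algebra, the Cohen-Macaulay defect of a localization is the sum of the defects of
the localizations of the base and of the fibre. -/
theorem exists_fiber_cmDefect_localization_eq_add [Module.Flat A T] (p : Ideal A) [p.IsPrime]
    (Q : Ideal T) [Q.IsPrime] [Q.LiesOver p] [hQ : IsNoetherianRing (Localization.AtPrime Q)] :
    ∃ q : PrimeSpectrum (p.Fiber T),
      Q = q.asIdeal.comap Algebra.TensorProduct.includeRight ∧
      IsNoetherianRing (Localization.AtPrime q.asIdeal) ∧
      cmDefect (Localization.AtPrime Q) =
        cmDefect (Localization.AtPrime p) + cmDefect (Localization.AtPrime q.asIdeal) := by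
  have key (r : PrimeSpectrum (p.Fiber T))
      (hr : Q = r.asIdeal.comap Algebra.TensorProduct.includeRight) :
      IsNoetherianRing (Localization.AtPrime r.asIdeal) ∧ cmDefect (Localization.AtPrime Q) =
        cmDefect (Localization.AtPrime p) + cmDefect (Localization.AtPrime r.asIdeal) := by
    subst hr
    exact cmDefect_localization_comap_includeRight p r.asIdeal
  refine ⟨PrimeSpectrum.primesOverOrderIsoFiber A T p (Ideal.primesOver.mk p Q), ?_, key _ ?_⟩ <;>
  rw [← PrimeSpectrum.coe_primesOverOrderIsoFiber_symm_apply, OrderIso.symm_apply_apply]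

theorem cmDefect_localization_le_of_liesOver [Module.Flat A T] (p : Ideal A) [p.IsPrime]
    (Q : Ideal T) [Q.IsPrime] [Q.LiesOver p] [IsNoetherianRing (Localization.AtPrime Q)] :
    cmDefect (Localization.AtPrime p) ≤ cmDefect (Localization.AtPrime Q) := by
  obtain ⟨_, _, _, h⟩ := exists_fiber_cmDefect_localization_eq_add p Q
  omega

theorem cmDefect_localization_fiber_le [Module.Flat A T] (p : Ideal A) [p.IsPrime]
    (q : Ideal (p.Fiber T)) [q.IsPrime] (Q : Ideal T) [Q.IsPrime]
    (hQ : Q = q.comap Algebra.TensorProduct.includeRight)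
    [IsNoetherianRing (Localization.AtPrime Q)] :
    cmDefect (Localization.AtPrime q) ≤ cmDefect (Localization.AtPrime Q) := by
  subst hQ
  obtain ⟨_, h⟩ := cmDefect_localization_comap_includeRight p q
  omega

theorem exists_localization_ringEquiv {F F' : Type*} [CommRing F] [CommRing F'] (e : F ≃+* F')
    (q : PrimeSpectrum F) : ∃ q' : PrimeSpectrum F', q.asIdeal = q'.asIdeal.comap (e : F →+* F') ∧
      Nonempty (Localization.AtPrime q.asIdeal ≃+* Localization.AtPrime q'.asIdeal) := by
  have h : q.asIdeal = (PrimeSpectrum.comap (e.symm : F' →+* F) q).asIdeal.comap (e : F →+* F') := by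
    ext x
    simp
  exact ⟨PrimeSpectrum.comap (e.symm : F' →+* F) q, h,
    ⟨Localization.localRingEquiv _ _ e h⟩⟩

end Fiber

section Principal

open IsLocalRing

theorem exists_eq_pow_mul_of_ne_zero {A : Type*} [CommRing A] [IsLocalRing A] [IsNoetherianRing A]
    {t : A} (ht : maximalIdeal A = Ideal.span {t}) {z : A} (hz : z ≠ 0) :
    ∃ (n : ℕ) (u : A), IsUnit u ∧ z = t ^ n * u := by
  classical
  have hex : ∃ n, z ∉ maximalIdeal A ^ n := by
    by_contra! h
    have h' : z ∈ (⨅ n, maximalIdeal A ^ n : Ideal A) := Submodule.mem_iInf _ |>.mpr h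
    rw [Ideal.iInf_pow_eq_bot_of_isLocalRing _ (maximalIdeal.isMaximal A).ne_top] at h'
    exact hz h'
  obtain ⟨n, hn⟩ : ∃ n, Nat.find hex = n + 1 := by
    refine Nat.exists_eq_succ_of_ne_zero fun h0 => ?_
    have := Nat.find_spec hex
    rw [h0] at this
    simp at this
  have h1 : z ∉ maximalIdeal A ^ (n + 1) := hn ▸ Nat.find_spec hex
  have h2 : z ∈ maximalIdeal A ^ n := not_not.mp (Nat.find_min hex (by omega))
  rw [ht, Ideal.span_singleton_pow, Ideal.mem_span_singleton] at h1 h2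
  obtain ⟨u, rfl⟩ := h2
  refine ⟨n, u, ?_, rfl⟩
  by_contra hu
  have hu : u ∈ maximalIdeal A := hu
  rw [ht, Ideal.mem_span_singleton] at hu
  exact h1 (pow_succ t n ▸ mul_dvd_mul_left _ hu)

theorem cmDefect_eq_zero_of_maximalIdeal_eq_span_singleton {A : Type*} [CommRing A] [IsLocalRing A]
    [IsNoetherianRing A] {t : A} (ht : maximalIdeal A = Ideal.span {t}) : cmDefect A = 0 := by
  rw [← Nat.le_zero, cmDefect_le_iff, Nat.cast_zero, add_zero]
  by_cases hd : localDepth A A = 0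
  · obtain ⟨z, hz, hmz⟩ := exists_ne_zero_smul_eq_zero_of_idealDepth_eq_zero
      (maximalIdeal_smul_top_ne_top A A) hd
    obtain ⟨n, u, hu, rfl⟩ := exists_eq_pow_mul_of_ne_zero ht hz
    have h0 : t ^ (n + 1) = 0 := by
      have := hmz t (ht ▸ Ideal.mem_span_singleton_self t)
      rw [smul_eq_mul, ← mul_assoc, ← pow_succ'] at this
      exact (hu.mul_left_eq_zero).mp this
    have hmin : maximalIdeal A ∈ minimalPrimes A := by
      refine ⟨⟨inferInstance, bot_le⟩, fun P hP _ => ?_⟩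
      rw [ht, Ideal.span_singleton_le_iff_mem]
      exact hP.1.mem_of_pow_mem (n + 1) (h0 ▸ P.zero_mem)
    rw [Ideal.height_eq_zero_iff.mpr hmin]
    exact zero_le
  · have h1 : (maximalIdeal A).height ≤ 1 := by
      have : (maximalIdeal A).IsPrincipal := ⟨⟨t, ht⟩⟩
      refine Ideal.height_le_one_of_isPrincipal_of_mem_minimalPrimes (maximalIdeal A) _ ?_
      rw [Ideal.minimalPrimes_eq_subsingleton_self]
      rfl
    exact h1.trans (Order.one_le_iff_pos.mpr (pos_iff_ne_zero.mpr hd))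

end Principal

section Field

open IsLocalRing TensorProduct Polynomial

theorem exists_aeval_eq_of_forall_exists_eq_aeval_div {E E' κ : Type*} [Field E] [Field E'] [Field κ]
    [Algebra E E'] [Algebra E κ] {x : E'} (hx : ∀ y, ∃ f g : E[X], y = aeval x f / aeval x g)
    (z : κ ⊗[E] E') :
    ∃ f g : κ[X], IsUnit (aeval (R := κ) ((1 : κ) ⊗ₜ[E] x) g) ∧
      aeval (R := κ) ((1 : κ) ⊗ₜ[E] x) g * z = aeval ((1 : κ) ⊗ₜ[E] x) f := by
  have hmap (f : E[X]) : aeval (R := κ) ((1 : κ) ⊗ₜ[E] x) (f.map (algebraMap E κ)) =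
      (1 : κ) ⊗ₜ[E] (aeval x f) := by
    rw [aeval_map_algebraMap]
    exact (aeval_algHom_apply (Algebra.TensorProduct.includeRight : E' →ₐ[E] κ ⊗[E] E') x f)
  induction z using TensorProduct.induction_on with
  | zero => exact ⟨0, 1, by simp, by simp⟩
  | add z₁ z₂ h₁ h₂ =>
    obtain ⟨f₁, g₁, hu₁, h₁⟩ := h₁
    obtain ⟨f₂, g₂, hu₂, h₂⟩ := h₂
    refine ⟨f₁ * g₂ + f₂ * g₁, g₁ * g₂, by simpa using ⟨hu₁, hu₂⟩, ?_⟩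
    simp only [map_add, map_mul, ← h₁, ← h₂]
    ring
  | tmul c y =>
    obtain ⟨f, g, hg, rfl⟩ : ∃ f g : E[X], aeval x g ≠ 0 ∧ y = aeval x f / aeval x g := by
      obtain ⟨f, g, h⟩ := hx y
      by_cases hg : aeval x g = 0
      · exact ⟨0, 1, by simp, by simp [h, hg]⟩
      · exact ⟨f, g, hg, h⟩
    refine ⟨C c * f.map (algebraMap E κ), g.map (algebraMap E κ), ?_, ?_⟩
    · rw [hmap]
      exact (IsUnit.mk0 _ hg).map (Algebra.TensorProduct.includeRight : E' →ₐ[E] κ ⊗[E] E')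
    · rw [map_mul, hmap, hmap, aeval_C, Algebra.TensorProduct.algebraMap_apply,
        Algebra.TensorProduct.tmul_mul_tmul, Algebra.TensorProduct.tmul_mul_tmul,
        mul_div_cancel₀ _ hg]
      simp

theorem isPrincipal_of_forall_exists_eq_aeval_div {E E' κ : Type*} [Field E] [Field E'] [Field κ]
    [Algebra E E'] [Algebra E κ] {x : E'} (hx : ∀ y, ∃ f g : E[X], y = aeval x f / aeval x g)
    (q : Ideal (κ ⊗[E] E')) : ∃ t, q = Ideal.span {t} := by
  let φ : κ[X] →ₐ[κ] κ ⊗[E] E' := aeval ((1 : κ) ⊗ₜ[E] x)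
  obtain ⟨h, hh⟩ := (IsPrincipalIdealRing.principal (q.comap φ)).principal
  refine ⟨φ h, le_antisymm (fun z hz => ?_) ?_⟩
  · obtain ⟨f, g, hu, hfg⟩ := exists_aeval_eq_of_forall_exists_eq_aeval_div hx z
    have hf : f ∈ q.comap φ := by
      rw [Ideal.mem_comap]
      exact hfg ▸ q.mul_mem_left _ hz
    rw [hh, Ideal.submodule_span_eq, Ideal.mem_span_singleton] at hf
    rw [Ideal.mem_span_singleton, ← hu.dvd_mul_left, hfg]
    exact map_dvd φ hf
  · rw [Ideal.span_singleton_le_iff_mem, ← Ideal.mem_comap, hh]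
    exact Submodule.mem_span_singleton_self h

theorem cmDefect_eq_zero_of_forall_exists_eq_aeval_div {E E' κ : Type*} [Field E] [Field E'] [Field κ]
    [Algebra E E'] [Algebra E κ] {x : E'} (hx : ∀ y, ∃ f g : E[X], y = aeval x f / aeval x g)
    (q : Ideal (κ ⊗[E] E')) [q.IsPrime] [IsNoetherianRing (Localization.AtPrime q)] :
    cmDefect (Localization.AtPrime q) = 0 := by
  obtain ⟨t, ht⟩ := isPrincipal_of_forall_exists_eq_aeval_div hx q
  refine cmDefect_eq_zero_of_maximalIdeal_eq_span_singleton
    (t := algebraMap _ (Localization.AtPrime q) t) ?_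
  have := congrArg (Ideal.map (algebraMap _ (Localization.AtPrime q))) ht
  rwa [Ideal.map_span, Set.image_singleton, Localization.AtPrime.map_eq_maximalIdeal] at this

end Field

section FieldTensor

open IsLocalRing TensorProduct

/-- If the maximal ideal of `T_Q` is extended from `A`, the Cohen-Macaulay defects agree. -/
theorem cmDefect_localization_eq_of_map_eq {A T : Type*} [CommRing A] [CommRing T] [Algebra A T]
    [Module.Flat A T] (p : Ideal A) [p.IsPrime] (Q : Ideal T) [Q.IsPrime] [Q.LiesOver p]
    [IsNoetherianRing (Localization.AtPrime Q)]
    (h : p.map (algebraMap A (Localization.AtPrime Q)) = maximalIdeal (Localization.AtPrime Q)) :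
    cmDefect (Localization.AtPrime Q) = cmDefect (Localization.AtPrime p) := by
  let := Localization.AtPrime.algebraOfLiesOver p Q
  have := isLocalHom_algebraMap_localization p Q
  have := isNoetherianRing_localization_of_liesOver p Q
  have hmap : (maximalIdeal (Localization.AtPrime p)).map
      (algebraMap (Localization.AtPrime p) (Localization.AtPrime Q)) =
      maximalIdeal (Localization.AtPrime Q) := by
    rw [← Localization.AtPrime.map_eq_maximalIdeal, Ideal.map_map,
      ← IsScalarTower.algebraMap_eq, h]
  have hfield : IsField (Localization.AtPrime Q ⧸ (maximalIdeal (Localization.AtPrime p)).map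
      (algebraMap (Localization.AtPrime p) (Localization.AtPrime Q))) :=
    (Ideal.Quotient.maximal_ideal_iff_isField_quotient _).mp (hmap ▸ maximalIdeal.isMaximal _)
  let := hfield.toField
  have hl : IsLocalRing (Localization.AtPrime Q ⧸ (maximalIdeal (Localization.AtPrime p)).map
      (algebraMap (Localization.AtPrime p) (Localization.AtPrime Q))) := inferInstance
  have h0 : cmDefect (Localization.AtPrime Q ⧸ (maximalIdeal (Localization.AtPrime p)).map
      (algebraMap (Localization.AtPrime p) (Localization.AtPrime Q))) = 0 :=
    cmDefect_eq_zero_of_maximalIdeal_eq_span_singleton (t := 0) (by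
      rw [Ideal.span_singleton_zero]
      exact IsLocalRing.isField_iff_maximalIdeal_eq.mp hfield)
  rw [cmDefect_eq_add_of_flat (A := Localization.AtPrime p) (C := Localization.AtPrime Q), h0,
    add_zero]

section BaseChange

variable (k E E' L : Type*) [CommRing k] [CommRing E] [CommRing E'] [CommRing L] [Algebra k E]
  [Algebra k E'] [Algebra E E'] [IsScalarTower k E E'] [Algebra k L]

/-- The base change of `E ⊗ L` to `E'` is `E' ⊗ L`. -/
def tensorBaseChangeEquiv : (E ⊗[k] L) ⊗[E] E' ≃+* E' ⊗[k] L :=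
  (Algebra.TensorProduct.comm E (E ⊗[k] L) E').toRingEquiv.trans
    (Algebra.TensorProduct.cancelBaseChange k E E' E' L).toRingEquiv

/-- The map `E ⊗ L → E' ⊗ L` induced by `E → E'`. -/
def tensorScalarExtension : E ⊗[k] L →+* E' ⊗[k] L :=
  (Algebra.TensorProduct.map (IsScalarTower.toAlgHom k E E') (AlgHom.id k L)).toRingHom

theorem tensorBaseChangeEquiv_comp_algebraMap :
    (tensorBaseChangeEquiv k E E' L : (E ⊗[k] L) ⊗[E] E' →+* E' ⊗[k] L).comp
      (algebraMap (E ⊗[k] L) ((E ⊗[k] L) ⊗[E] E')) = tensorScalarExtension k E E' L := by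
  refine RingHom.ext fun x => ?_
  induction x using TensorProduct.induction_on with
  | zero => simp
  | add x y hx hy => rw [map_add, map_add, hx, hy]
  | tmul x y =>
    change Algebra.TensorProduct.cancelBaseChange k E E' E' L (1 ⊗ₜ (x ⊗ₜ y)) =
      algebraMap E E' x ⊗ₜ y
    simp [Algebra.algebraMap_eq_smul_one]

theorem tensorScalarExtension_comp (E'' : Type*) [CommRing E''] [Algebra k E''] [Algebra E' E'']
    [IsScalarTower k E' E''] [Algebra E E''] [IsScalarTower k E E''] [IsScalarTower E E' E''] :
    (tensorScalarExtension k E' E'' L).comp (tensorScalarExtension k E E' L) =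
      tensorScalarExtension k E E'' L := by
  refine RingHom.ext fun x => ?_
  induction x using TensorProduct.induction_on with
  | zero => simp
  | add x y hx hy => rw [map_add, map_add, hx, hy]
  | tmul x y =>
    simp [tensorScalarExtension, ← IsScalarTower.algebraMap_apply]

end BaseChange

section Prime

variable {k E E' L : Type*} [CommRing k] [CommRing E] [CommRing E'] [CommRing L] [Algebra k E]
  [Algebra k E'] [Algebra E E'] [IsScalarTower k E E'] [Algebra k L] (Q : Ideal (E' ⊗[k] L))

theorem liesOver_comap_tensorBaseChangeEquiv :
    (Q.comap (tensorBaseChangeEquiv k E E' L : (E ⊗[k] L) ⊗[E] E' →+* E' ⊗[k] L)).LiesOver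
      (Q.comap (tensorScalarExtension k E E' L)) := by
  refine ⟨?_⟩
  rw [Ideal.under_def, Ideal.comap_comap, tensorBaseChangeEquiv_comp_algebraMap]

variable [Q.IsPrime]

/-- Localizations of `E' ⊗ L` as localizations of the base change of `E ⊗ L`. -/
def localizationBaseChangeEquiv : Localization.AtPrime
    (Q.comap (tensorBaseChangeEquiv k E E' L : (E ⊗[k] L) ⊗[E] E' →+* E' ⊗[k] L)) ≃+*
    Localization.AtPrime Q :=
  Localization.localRingEquiv _ Q (tensorBaseChangeEquiv k E E' L) rfl

theorem cmDefect_localization_comap_tensorBaseChangeEquiv :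
    cmDefect (Localization.AtPrime
      (Q.comap (tensorBaseChangeEquiv k E E' L : (E ⊗[k] L) ⊗[E] E' →+* E' ⊗[k] L))) =
      cmDefect (Localization.AtPrime Q) :=
  cmDefect_eq_of_ringEquiv (A := Localization.AtPrime
      (Q.comap (tensorBaseChangeEquiv k E E' L : (E ⊗[k] L) ⊗[E] E' →+* E' ⊗[k] L)))
    (A' := Localization.AtPrime Q) (localizationBaseChangeEquiv Q)

variable [IsNoetherianRing (Localization.AtPrime Q)]

theorem isNoetherianRing_localization_comap_tensorBaseChangeEquiv :
    IsNoetherianRing (Localization.AtPrime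
      (Q.comap (tensorBaseChangeEquiv k E E' L : (E ⊗[k] L) ⊗[E] E' →+* E' ⊗[k] L))) :=
  isNoetherianRing_of_ringEquiv _ (localizationBaseChangeEquiv Q).symm

variable [Module.Flat E E']

theorem isNoetherianRing_localization_comap_tensorScalarExtension :
    IsNoetherianRing (Localization.AtPrime (Q.comap (tensorScalarExtension k E E' L))) := by
  have := liesOver_comap_tensorBaseChangeEquiv (E := E) Q
  have := isNoetherianRing_localization_comap_tensorBaseChangeEquiv (E := E) Q
  exact isNoetherianRing_localization_of_liesOver _
    (Q.comap (tensorBaseChangeEquiv k E E' L : (E ⊗[k] L) ⊗[E] E' →+* E' ⊗[k] L))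

theorem cmDefect_localization_comap_tensorScalarExtension_of_map_eq
    (h : (Q.comap (tensorScalarExtension k E E' L)).map
      ((algebraMap _ (Localization.AtPrime Q)).comp (tensorScalarExtension k E E' L)) =
      maximalIdeal (Localization.AtPrime Q)) :
    cmDefect (Localization.AtPrime Q) =
      cmDefect (Localization.AtPrime (Q.comap (tensorScalarExtension k E E' L))) := by
  have := liesOver_comap_tensorBaseChangeEquiv (E := E) Q
  have := isNoetherianRing_localization_comap_tensorBaseChangeEquiv (E := E) Q
  rw [← cmDefect_localization_comap_tensorBaseChangeEquiv (E := E) Q]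
  refine cmDefect_localization_eq_of_map_eq _ _ ?_
  let ε : Localization.AtPrime (Q.comap (tensorBaseChangeEquiv k E E' L :
      (E ⊗[k] L) ⊗[E] E' →+* E' ⊗[k] L)) →+* Localization.AtPrime Q :=
    localizationBaseChangeEquiv (E := E) Q
  have hε : Function.Bijective ε := (localizationBaseChangeEquiv (E := E) Q).bijective
  have hcomp : ε.comp (algebraMap (E ⊗[k] L) (Localization.AtPrime
      (Q.comap (tensorBaseChangeEquiv k E E' L : (E ⊗[k] L) ⊗[E] E' →+* E' ⊗[k] L)))) =
      (algebraMap _ (Localization.AtPrime Q)).comp (tensorScalarExtension k E E' L) := by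
    rw [← tensorBaseChangeEquiv_comp_algebraMap]
    refine RingHom.ext fun x => ?_
    rw [IsScalarTower.algebraMap_eq (E ⊗[k] L) ((E ⊗[k] L) ⊗[E] E')]
    exact Localization.localRingHom_to_map _ Q _ rfl _
  have hmax : (maximalIdeal (Localization.AtPrime Q)).comap
      ε = maximalIdeal _ :=
    IsLocalRing.eq_maximalIdeal (Ideal.comap_isMaximal_of_surjective _ hε.surjective)
  rw [← hmax, ← h, ← hcomp, ← Ideal.map_map]
  exact (Ideal.comap_map_of_bijective _ hε).symm

end Prime

section Field
open Polynomial
variable {k E E' L : Type*} [Field k] [Field E] [Field E'] [Field L] [Algebra k E]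
  [Algebra k E'] [Algebra E E'] [IsScalarTower k E E'] [Algebra k L]

theorem cmDefect_localization_eq_zero_of_forall_exists_eq_aeval_div {x : E'}
    (hx : ∀ y, ∃ f g : E[X], y = aeval x f / aeval x g)
    (Q : Ideal (E' ⊗[k] L)) [Q.IsPrime] [IsNoetherianRing (Localization.AtPrime Q)]
    (h : cmDefect (Localization.AtPrime (Q.comap (tensorScalarExtension k E E' L))) = 0) :
    cmDefect (Localization.AtPrime Q) = 0 := by
  have := liesOver_comap_tensorBaseChangeEquiv (E := E) Q
  have := isNoetherianRing_localization_comap_tensorBaseChangeEquiv (E := E) Q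
  rw [← cmDefect_localization_comap_tensorBaseChangeEquiv (E := E) Q]
  obtain ⟨q, -, hq, hadd⟩ := exists_fiber_cmDefect_localization_eq_add
    (Q.comap (tensorScalarExtension k E E' L))
    (Q.comap (tensorBaseChangeEquiv k E E' L : (E ⊗[k] L) ⊗[E] E' →+* E' ⊗[k] L))
  obtain ⟨q', -, ⟨e⟩⟩ := exists_localization_ringEquiv
    (Algebra.TensorProduct.cancelBaseChange E (E ⊗[k] L) (E ⊗[k] L)
      (Q.comap (tensorScalarExtension k E E' L)).ResidueField E').toRingEquiv q
  have : IsNoetherianRing (Localization.AtPrime q'.asIdeal) := isNoetherianRing_of_ringEquiv _ e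
  rw [hadd, h, cmDefect_eq_of_ringEquiv e,
    cmDefect_eq_zero_of_forall_exists_eq_aeval_div hx q'.asIdeal]

end Field

end FieldTensor

section FieldTensorCM

open IsLocalRing TensorProduct IntermediateField

variable {k K L : Type*} [Field k] [Field K] [Field L] [Algebra k K] [Algebra k L]

theorem cmDefect_localization_congr {T : Type*} [CommRing T] {P P' : Ideal T} [P.IsPrime]
    [P'.IsPrime] (h : P = P') :
    cmDefect (Localization.AtPrime P) = cmDefect (Localization.AtPrime P') := by
  subst h
  rfl

theorem exists_finset_mem_range_tensorScalarExtension (t : K ⊗[k] L) :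
    ∃ S : Finset K, ∀ F : IntermediateField k K, (S : Set K) ⊆ F →
      t ∈ (tensorScalarExtension k F K L).range := by
  classical
  induction t using TensorProduct.induction_on with
  | zero => exact ⟨∅, fun F _ => zero_mem _⟩
  | tmul x y =>
    refine ⟨{x}, fun F hF => ⟨(⟨x, hF (by simp)⟩ : F) ⊗ₜ y, ?_⟩⟩
    simp [tensorScalarExtension]
  | add x y hx hy =>
    obtain ⟨S, hS⟩ := hx
    obtain ⟨S', hS'⟩ := hy
    refine ⟨S ∪ S', fun F hF => ?_⟩
    rw [Finset.coe_union, Set.union_subset_iff] at hF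
    exact add_mem (hS F hF.1) (hS' F hF.2)

/-- The maximal ideal of a noetherian localization of `K ⊗ L` is generated by elements defined over
a finitely generated subextension of `K`. -/
theorem exists_finset_map_comap_tensorScalarExtension_eq (Q : Ideal (K ⊗[k] L)) [Q.IsPrime]
    [IsNoetherianRing (Localization.AtPrime Q)] :
    ∃ S : Finset K, (Q.comap (tensorScalarExtension k (adjoin k (S : Set K)) K L)).map
      ((algebraMap _ (Localization.AtPrime Q)).comp
        (tensorScalarExtension k (adjoin k (S : Set K)) K L)) =
      maximalIdeal (Localization.AtPrime Q) := by
  classical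
  obtain ⟨s, hsQ, hs⟩ : ∃ s : Finset (K ⊗[k] L), (s : Set (K ⊗[k] L)) ⊆ Q ∧
      maximalIdeal (Localization.AtPrime Q) =
        Ideal.span (algebraMap _ (Localization.AtPrime Q) '' (s : Set (K ⊗[k] L))) := by
    have hfg : (Ideal.span (algebraMap _ (Localization.AtPrime Q) '' (Q : Set (K ⊗[k] L)))).FG :=
      IsNoetherian.noetherian _
    obtain ⟨s', hs', h⟩ := (Submodule.fg_span_iff_fg_span_finset_subset _).mp hfg
    obtain ⟨s, hsQ, rfl⟩ := Finset.subset_set_image_iff.mp hs'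
    refine ⟨s, hsQ, ?_⟩
    have hm := (Localization.AtPrime.map_eq_maximalIdeal (I := Q)).symm
    rw [Finset.coe_image] at h
    exact hm.trans h
  choose S hS using exists_finset_mem_range_tensorScalarExtension (k := k) (K := K) (L := L)
  refine ⟨s.biUnion S, le_antisymm ?_ ?_⟩
  · rw [← Ideal.map_map, ← Localization.AtPrime.map_eq_maximalIdeal]
    exact Ideal.map_mono Ideal.map_comap_le
  · rw [hs, Ideal.span_le]
    rintro _ ⟨t, ht, rfl⟩
    obtain ⟨y, rfl⟩ := hS t (adjoin k ((s.biUnion S : Finset K) : Set K)) (by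
      refine subset_trans ?_ (subset_adjoin k _)
      exact_mod_cast Finset.subset_biUnion_of_mem S ht)
    exact Ideal.mem_map_of_mem
      ((algebraMap _ (Localization.AtPrime Q)).comp (tensorScalarExtension k _ K L)) (hsQ ht)

theorem cmDefect_localization_eq_zero_of_surjective (h : Function.Surjective (algebraMap k K))
    (Q : Ideal (K ⊗[k] L)) [Q.IsPrime] : cmDefect (Localization.AtPrime Q) = 0 := by
  have hQ : Q = ⊥ := by
    refine (Submodule.eq_bot_iff _).mpr fun t ht => ?_
    obtain ⟨y, rfl⟩ := Algebra.TensorProduct.includeRight_surjective L h t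
    by_contra hy
    have hy0 : y ≠ 0 := fun h0 => hy (by rw [h0, map_zero])
    exact Ideal.IsPrime.ne_top ‹_› (Ideal.eq_top_of_isUnit_mem _ ht
      ((IsUnit.mk0 y hy0).map (Algebra.TensorProduct.includeRight : L →ₐ[k] K ⊗[k] L)))
  have hm : maximalIdeal (Localization.AtPrime Q) = Ideal.span {0} := by
    rw [← Localization.AtPrime.map_eq_maximalIdeal, Ideal.span_singleton_zero]
    conv_lhs => arg 2; rw [hQ]
    exact Ideal.map_bot
  have hN : IsNoetherianRing (Localization.AtPrime Q) := by
    have hf : IsField (Localization.AtPrime Q) :=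
      IsLocalRing.isField_iff_maximalIdeal_eq.mpr (hm.trans Ideal.span_singleton_zero)
    let := hf.toField
    exact inferInstanceAs (IsNoetherianRing (Localization.AtPrime Q))
  exact cmDefect_eq_zero_of_maximalIdeal_eq_span_singleton hm

/-- The noetherian localizations of a tensor product of fields are Cohen-Macaulay. -/
theorem cmDefect_localization_tensorProduct_field (Q : Ideal (K ⊗[k] L)) [Q.IsPrime]
    [IsNoetherianRing (Localization.AtPrime Q)] : cmDefect (Localization.AtPrime Q) = 0 := by
  obtain ⟨S, hS⟩ := exists_finset_map_comap_tensorScalarExtension_eq Q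
  rw [cmDefect_localization_comap_tensorScalarExtension_of_map_eq Q hS]
  refine IntermediateField.induction_on_adjoin_finset S (fun F => cmDefect
    (Localization.AtPrime (Q.comap (tensorScalarExtension k F K L))) = 0) ?_ ?_
  · exact cmDefect_localization_eq_zero_of_surjective (fun ⟨x, hx⟩ => by
      obtain ⟨y, rfl⟩ := IntermediateField.mem_bot.mp hx
      exact ⟨y, rfl⟩) _
  · intro F x _ hF
    have hle : F ≤ F⟮x⟯.restrictScalars k := fun y hy => F⟮x⟯.algebraMap_mem ⟨y, hy⟩
    have hx : x ∈ F⟮x⟯.restrictScalars k := mem_adjoin_simple_self F x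
    have hmem (y : K) (hy : y ∈ F⟮x⟯.restrictScalars k) :
        ∃ f g : Polynomial F, y = Polynomial.aeval x f / Polynomial.aeval x g :=
      (mem_adjoin_simple_iff F y).mp hy
    generalize F⟮x⟯.restrictScalars k = F' at *
    let := (IntermediateField.inclusion hle).toRingHom.toAlgebra
    have : IsScalarTower k F F' := .of_algebraMap_eq fun _ => rfl
    have : IsScalarTower F F' K := .of_algebraMap_eq fun _ => rfl
    have hN := isNoetherianRing_localization_comap_tensorScalarExtension (E := F') Q
    refine cmDefect_localization_eq_zero_of_forall_exists_eq_aeval_div (E := F) (E' := F')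
      (x := ⟨x, hx⟩) ?_ (Q.comap (tensorScalarExtension k F' K L)) ?_
    · rintro ⟨y, hy⟩
      obtain ⟨f, g, h⟩ := hmem y hy
      refine ⟨f, g, (algebraMap F' K).injective ?_⟩
      rw [map_div₀, ← Polynomial.aeval_algebraMap_apply, ← Polynomial.aeval_algebraMap_apply]
      exact h
    · exact (cmDefect_localization_congr (by
        rw [Ideal.comap_comap, tensorScalarExtension_comp])).trans hF

end FieldTensorCM

section TensorPrimes

open IsLocalRing TensorProduct

theorem Ideal.comap_algebraMap_residueField_of_isPrime {A S : Type*} [CommRing A] [CommRing S]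
    (p : Ideal A) [p.IsPrime] (f : p.ResidueField →+* S) (m : Ideal S) [m.IsPrime] :
    m.comap (f.comp (algebraMap A p.ResidueField)) = p := by
  rw [← Ideal.comap_comap, Ideal.eq_bot_of_prime (m.comap f), ← RingHom.ker_eq_comap_bot,
    Ideal.ker_algebraMap_residueField]

variable {R A B : Type*} [CommRing R] [CommRing A] [CommRing B] [Algebra R A] [Algebra R B]

theorem exists_isPrime_comap_includeLeft_eq_comap_includeRight_eq (p : Ideal A) [p.IsPrime]
    (q : Ideal B) [q.IsPrime] (h : p.comap (algebraMap R A) = q.comap (algebraMap R B)) :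
    ∃ Q : Ideal (A ⊗[R] B), Q.IsPrime ∧ Q.comap (algebraMap A (A ⊗[R] B)) = p ∧
      Q.comap (Algebra.TensorProduct.includeRight : B →ₐ[R] A ⊗[R] B) = q := by
  let r := p.comap (algebraMap R A)
  let := (Ideal.ResidueField.map r p (algebraMap R A) rfl).toAlgebra
  let := (Ideal.ResidueField.map r q (algebraMap R B) h).toAlgebra
  let f : A ⊗[R] B →+* p.ResidueField ⊗[r.ResidueField] q.ResidueField :=
    Algebra.TensorProduct.mapRingHom (algebraMap R r.ResidueField) (algebraMap A p.ResidueField)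
      (algebraMap B q.ResidueField)
      (RingHom.ext fun x => (Ideal.ResidueField.map_algebraMap ..).symm)
      (RingHom.ext fun x => (Ideal.ResidueField.map_algebraMap ..).symm)
  obtain ⟨m, hm⟩ := Ideal.exists_maximal (p.ResidueField ⊗[r.ResidueField] q.ResidueField)
  refine ⟨m.comap f, inferInstance, ?_, ?_⟩
  · rw [Ideal.comap_comap]
    have : f.comp (algebraMap A (A ⊗[R] B)) =
        (algebraMap p.ResidueField (p.ResidueField ⊗[r.ResidueField] q.ResidueField)).comp
          (algebraMap A p.ResidueField) := by
      ext x
      change f (x ⊗ₜ 1) = _ ⊗ₜ 1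
      simp [f]
    rw [this, Ideal.comap_algebraMap_residueField_of_isPrime]
  · change (m.comap f).comap
      ((Algebra.TensorProduct.includeRight : B →ₐ[R] A ⊗[R] B) : B →+* A ⊗[R] B) = q
    rw [Ideal.comap_comap]
    have : f.comp ((Algebra.TensorProduct.includeRight : B →ₐ[R] A ⊗[R] B) : B →+* A ⊗[R] B) =
        ((Algebra.TensorProduct.includeRight : q.ResidueField →ₐ[r.ResidueField]
          p.ResidueField ⊗[r.ResidueField] q.ResidueField) : q.ResidueField →+* _).comp
          (algebraMap B q.ResidueField) := by
      ext x
      simp [f]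
    rw [this, Ideal.comap_algebraMap_residueField_of_isPrime]

/-- If all localizations of `A ⊗ B` have Cohen-Macaulay defect at most one, then `A_p` is almost
Cohen-Macaulay for each prime `p` of `A` sharing its contraction to `R` with a prime of `B`. -/
theorem isAlmostCMRing_localization_of_forall_cmDefect_le_one [Module.Flat R B]
    [IsNoetherianRing (A ⊗[R] B)]
    (hT : ∀ (Q : Ideal (A ⊗[R] B)) [Q.IsPrime], cmDefect (Localization.AtPrime Q) ≤ 1)
    (p : Ideal A) [p.IsPrime] (q : Ideal B) [q.IsPrime]
    (h : p.comap (algebraMap R A) = q.comap (algebraMap R B)) :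
    IsAlmostCMRing (Localization.AtPrime p) := by
  have hN : IsNoetherianRing (Localization.AtPrime p) := by
    obtain ⟨Q, hQ, hQp, -⟩ := exists_isPrime_comap_includeLeft_eq_comap_includeRight_eq p q h
    have : Q.LiesOver p := ⟨hQp.symm⟩
    exact isNoetherianRing_localization_of_liesOver p Q
  refine isAlmostCMRing_of_cmDefect_le_one fun P' _ => ?_
  let p' := P'.comap (algebraMap A (Localization.AtPrime p))
  have := Algebra.HasGoingDown.of_flat (R := R) (S := B)
  have : q.LiesOver (p.comap (algebraMap R A)) := ⟨h⟩
  have hle : p' ≤ p := by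
    rw [← Localization.AtPrime.under_maximalIdeal (I := p)]
    exact Ideal.comap_mono (IsLocalRing.le_maximalIdeal_of_isPrime P')
  obtain ⟨q', -, hq', ⟨hq'p'⟩⟩ := Ideal.exists_ideal_le_liesOver_of_le
    (p := p'.comap (algebraMap R A)) (q := p.comap (algebraMap R A)) q (Ideal.comap_mono hle)
  obtain ⟨Q, hQ, hQp, -⟩ := exists_isPrime_comap_includeLeft_eq_comap_includeRight_eq p' q' hq'p'
  have : Q.LiesOver p' := ⟨hQp.symm⟩
  have hp' := (cmDefect_localization_le_of_liesOver p' Q).trans (hT Q)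
  have e := IsLocalization.localizationLocalizationAtPrimeIsoLocalization p.primeCompl P'
  rwa [← cmDefect_eq_of_ringEquiv (A := Localization.AtPrime p')
    (A' := Localization.AtPrime P') e.toRingEquiv]

theorem cmDefect_localization_tensorProduct_comm_le
    (hT : ∀ (Q : Ideal (A ⊗[R] B)) [Q.IsPrime], cmDefect (Localization.AtPrime Q) ≤ 1)
    (Q : Ideal (B ⊗[R] A)) [Q.IsPrime] : cmDefect (Localization.AtPrime Q) ≤ 1 := by
  obtain ⟨Q', -, ⟨e⟩⟩ := exists_localization_ringEquiv
    (Algebra.TensorProduct.comm R B A).toRingEquiv ⟨Q, inferInstance⟩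
  rw [cmDefect_eq_of_ringEquiv (A := Localization.AtPrime Q)
    (A' := Localization.AtPrime Q'.asIdeal) e]
  exact hT _

end TensorPrimes

section TensorBound

open IsLocalRing TensorProduct

/-- Extending the ground field does not change the Cohen-Macaulay defect. -/
theorem cmDefect_localization_eq_comap_of_field {k D K : Type*} [Field k] [CommRing D] [Field K]
    [Algebra k D] [Algebra k K] (Q : Ideal (D ⊗[k] K)) [Q.IsPrime]
    [IsNoetherianRing (Localization.AtPrime Q)] :
    cmDefect (Localization.AtPrime Q) =
      cmDefect (Localization.AtPrime (Q.comap (algebraMap D (D ⊗[k] K)))) := by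
  let q := Q.comap (algebraMap D (D ⊗[k] K))
  have : Q.LiesOver q := ⟨rfl⟩
  obtain ⟨s, -, hs, hadd⟩ := exists_fiber_cmDefect_localization_eq_add q Q
  obtain ⟨s', -, ⟨e⟩⟩ := exists_localization_ringEquiv
    (Algebra.TensorProduct.cancelBaseChange k D D q.ResidueField K).toRingEquiv s
  have : IsNoetherianRing (Localization.AtPrime s'.asIdeal) := isNoetherianRing_of_ringEquiv _ e
  rw [hadd, cmDefect_eq_of_ringEquiv (A := Localization.AtPrime s.asIdeal)
    (A' := Localization.AtPrime s'.asIdeal) e,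
    cmDefect_localization_tensorProduct_field s'.asIdeal, add_zero]

variable {R A B : Type*} [CommRing R] [CommRing A] [CommRing B] [Algebra R A] [Algebra R B]
  [Module.Flat R B]

/-- The Cohen-Macaulay defect of a localization of a flat tensor product is at most the sum of the
defects of the corresponding localizations of the factors. -/
theorem cmDefect_localization_tensorProduct_le (Q : Ideal (A ⊗[R] B)) [Q.IsPrime]
    [IsNoetherianRing (Localization.AtPrime Q)] (p : Ideal A) [p.IsPrime] (q : Ideal B) [q.IsPrime]
    (hp : Q.comap (algebraMap A (A ⊗[R] B)) = p)
    (hq : Q.comap (Algebra.TensorProduct.includeRight : B →ₐ[R] A ⊗[R] B) = q)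
    [IsNoetherianRing (Localization.AtPrime q)] :
    cmDefect (Localization.AtPrime Q) ≤
      cmDefect (Localization.AtPrime p) + cmDefect (Localization.AtPrime q) := by
  have : Q.LiesOver p := ⟨hp.symm⟩
  obtain ⟨Q₀, hQ₀, hN₀, hadd⟩ := exists_fiber_cmDefect_localization_eq_add p Q
  let r := p.comap (algebraMap R A)
  let := (Ideal.ResidueField.map r p (algebraMap R A) rfl).toAlgebra
  have : IsScalarTower R r.ResidueField p.ResidueField :=
    .of_algebraMap_eq fun x => (Ideal.ResidueField.map_algebraMap ..).symm
  let e : p.Fiber (A ⊗[R] B) ≃+* r.Fiber B ⊗[r.ResidueField] p.ResidueField :=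
    (Algebra.TensorProduct.cancelBaseChange R A A p.ResidueField B).toRingEquiv.trans <|
      (Algebra.TensorProduct.cancelBaseChange R r.ResidueField r.ResidueField p.ResidueField
        B).symm.toRingEquiv.trans (Algebra.TensorProduct.comm r.ResidueField _ _).toRingEquiv
  obtain ⟨Q₁, hQ₁, ⟨ε⟩⟩ := exists_localization_ringEquiv
    (F' := r.Fiber B ⊗[r.ResidueField] p.ResidueField) e Q₀
  have : IsNoetherianRing (Localization.AtPrime Q₁.asIdeal) := isNoetherianRing_of_ringEquiv _ ε
  rw [hadd, cmDefect_eq_of_ringEquiv (A := Localization.AtPrime Q₀.asIdeal)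
    (A' := Localization.AtPrime Q₁.asIdeal) ε, cmDefect_localization_eq_comap_of_field]
  refine Nat.add_le_add_left (cmDefect_localization_fiber_le r _ q ?_) _
  rw [← hq, hQ₀, hQ₁]
  ext b
  simp only [Ideal.mem_comap]
  have : e (1 ⊗ₜ (1 ⊗ₜ b)) = (1 ⊗ₜ b) ⊗ₜ 1 := by
    simp [e]
  exact iff_of_eq (congrArg (· ∈ Q₁.asIdeal) this)

end TensorBound

section Main

open IsLocalRing

theorem cmDefect_le_one_of_isAlmostCMRing_of_isLocalRing {A : Type*} [CommRing A] [IsLocalRing A]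
    [IsNoetherianRing A] (h : IsAlmostCMRing A) : cmDefect A ≤ 1 := by
  rw [cmDefect_eq_of_ringEquiv (A := A) (A' := Localization.AtPrime (maximalIdeal A))
    (IsLocalization.atUnits A (maximalIdeal A).primeCompl
      (fun x hx => notMem_maximalIdeal.mp hx)).toRingEquiv]
  exact cmDefect_le_one_of_isAlmostCMRing h _

variable {R A B : Type*} [CommRing R] [CommRing A] [CommRing B] [Algebra R A] [Algebra R B]
  [Module.Flat R A]

theorem isNoetherianRing_localization_comap_includeRight [IsNoetherianRing (A ⊗[R] B)]
    (Q : Ideal (A ⊗[R] B)) [Q.IsPrime] : IsNoetherianRing (Localization.AtPrime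
      (Q.comap (Algebra.TensorProduct.includeRight : B →ₐ[R] A ⊗[R] B))) := by
  let e : B ⊗[R] A ≃+* A ⊗[R] B := (Algebra.TensorProduct.comm R B A).toRingEquiv
  have : IsNoetherianRing (B ⊗[R] A) := isNoetherianRing_of_ringEquiv _ e.symm
  have : (Q.comap (e : B ⊗[R] A →+* A ⊗[R] B)).LiesOver
      (Q.comap (Algebra.TensorProduct.includeRight : B →ₐ[R] A ⊗[R] B)) := by
    refine ⟨?_⟩
    ext b
    rfl
  exact isNoetherianRing_localization_of_liesOver _ (Q.comap (e : B ⊗[R] A →+* A ⊗[R] B))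

end Main

theorem tensor_flat_algebras_almostCM (R : Type u) [CommRing R]
    (A : Type v) (B : Type w) [CommRing A] [CommRing B] [Algebra R A] [Algebra R B]
    [Module.Flat R A] [Module.Flat R B] [IsNoetherianRing (A ⊗[R] B)] :
    (IsAlmostCMRing (A ⊗[R] B) →
      ∀ (p : PrimeSpectrum A) (q : PrimeSpectrum B),
        PrimeSpectrum.comap (algebraMap R A) p = PrimeSpectrum.comap (algebraMap R B) q →
        IsAlmostCMRing (Localization.AtPrime p.asIdeal) ∧
          IsAlmostCMRing (Localization.AtPrime q.asIdeal)) ∧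
    ((∀ (p : PrimeSpectrum A) (q : PrimeSpectrum B),
        PrimeSpectrum.comap (algebraMap R A) p = PrimeSpectrum.comap (algebraMap R B) q →
        IsAlmostCMRing (Localization.AtPrime p.asIdeal) ∧
          IsAlmostCMRing (Localization.AtPrime q.asIdeal) ∧
          (IsLocalCMRing (Localization.AtPrime p.asIdeal) ∨
            IsLocalCMRing (Localization.AtPrime q.asIdeal))) →
      IsAlmostCMRing (A ⊗[R] B)) := by
  constructor
  · intro hT p q hpq
    have hle (Q : Ideal (A ⊗[R] B)) [Q.IsPrime] : cmDefect (Localization.AtPrime Q) ≤ 1 :=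
      cmDefect_le_one_of_isAlmostCMRing hT Q
    have h : p.asIdeal.comap (algebraMap R A) = q.asIdeal.comap (algebraMap R B) :=
      congrArg PrimeSpectrum.asIdeal hpq
    have : IsNoetherianRing (B ⊗[R] A) :=
      isNoetherianRing_of_ringEquiv _ (Algebra.TensorProduct.comm R A B).toRingEquiv
    exact ⟨isAlmostCMRing_localization_of_forall_cmDefect_le_one hle _ _ h,
      isAlmostCMRing_localization_of_forall_cmDefect_le_one
        (cmDefect_localization_tensorProduct_comm_le hle) _ _ h.symm⟩
  · intro h
    refine isAlmostCMRing_of_cmDefect_le_one fun Q _ => ?_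
    let p : PrimeSpectrum A := PrimeSpectrum.comap (algebraMap A (A ⊗[R] B)) ⟨Q, inferInstance⟩
    let q : PrimeSpectrum B := PrimeSpectrum.comap
      (Algebra.TensorProduct.includeRight : B →ₐ[R] A ⊗[R] B).toRingHom ⟨Q, inferInstance⟩
    have : Q.LiesOver p.asIdeal := ⟨rfl⟩
    have : IsNoetherianRing (Localization.AtPrime p.asIdeal) :=
      isNoetherianRing_localization_of_liesOver p.asIdeal Q
    have : IsNoetherianRing (Localization.AtPrime q.asIdeal) :=
      isNoetherianRing_localization_comap_includeRight Q
    have hpq : PrimeSpectrum.comap (algebraMap R A) p = PrimeSpectrum.comap (algebraMap R B) q := by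
      rw [← PrimeSpectrum.comap_comp_apply, ← PrimeSpectrum.comap_comp_apply,
        ← IsScalarTower.algebraMap_eq]
      congr 1
      exact (Algebra.TensorProduct.includeRight : B →ₐ[R] A ⊗[R] B).comp_algebraMap.symm
    obtain ⟨hp, hq, hCM⟩ := h p q hpq
    have hle := cmDefect_localization_tensorProduct_le Q p.asIdeal q.asIdeal rfl rfl
    have hp1 := cmDefect_le_one_of_isAlmostCMRing_of_isLocalRing hp
    have hq1 := cmDefect_le_one_of_isAlmostCMRing_of_isLocalRing hq
    rcases hCM with hCM | hCM
    · have := (cmDefect_eq_zero_iff _).mpr hCM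
      omega
    · have := (cmDefect_eq_zero_iff _).mpr hCM
      omega

end
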